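/- arXiv:2212.06670 — 2 statements merged into one kernel-verified Lean document; each statement's English description precedes it below -/
import Mathlib

section
/- Let W be the Weyl group of type A_n with simple reflections s_1, …, s_n, fix 1 ≤ i ≤ n, set κ = (n+1)/gcd(n+1, i) and J = {j ∈ {1,…,n} : κ does not divide j}. Then the set of elements of minimal length in the conjugacy class of (s_1 s_2 ⋯ s_n)^i in W equals the set of Coxeter elements of the standard parabolic subgroup W_J; in particular, the minimal length in this conjugacy class equals |J| = n + 1 − gcd(n+1, i), and it also equals the minimal reflection length among elements of the class. -/
noncomputable section
open CoxeterMatrix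

/-- The Weyl group of type `Aₙ`, given by its Coxeter presentation. -/
abbrev WA (n : ℕ) := (Aₙ n).Group

/-- The canonical Coxeter system of type `Aₙ`. -/
def csA (n : ℕ) : CoxeterSystem (Aₙ n) (WA n) := (Aₙ n).toCoxeterSystem

/-- `segA n a b` is the product `s_a s_{a+1} ⋯ s_b` of the simple reflections with
Bourbaki labels `a, a+1, …, b` (so `s_j`, `1 ≤ j ≤ n`, is `(csA n).simple ⟨j-1, _⟩`). -/
def segA (n a b : ℕ) : WA n :=
  (((List.finRange n).filter fun k : Fin n => a ≤ (k : ℕ) + 1 ∧ (k : ℕ) + 1 ≤ b).map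
    (csA n).simple).prod

/-- The standard parabolic subgroup of the type-`Aₙ` Weyl group generated by all simple
reflections except the one with (zero-based) index `i`. -/
def paraA (n : ℕ) (i : Fin n) : Subgroup (WA n) :=
  Subgroup.closure ((csA n).simple '' {j : Fin n | j ≠ i})

/-- The reflection length on the type-`Aₙ` Weyl group: the least number of reflections
(conjugates of simple reflections) whose product is `w`. -/
def reflLenA (n : ℕ) (w : WA n) : ℕ :=
  sInf {k : ℕ | ∃ l : List (WA n), (∀ t ∈ l, (csA n).IsReflection t) ∧
    l.length = k ∧ w = l.prod}

/-!
The Weyl group is the symmetric group on `{0, …, n}`, with `s_j` the transposition `(j-1 j)`,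
and the class of `(s_1 ⋯ s_n)^i` consists of the permutations all of whose cycles have length `κ`.
A function that is constant along each of a list of transpositions is constant on the cycles of
their product, so by linear algebra a product of `m` transpositions has at least `n + 1 - m` cycles.
This bounds the reflection length, and with it the length, below by `n + 1 - (n + 1) / κ`. A product
of the distinct `s_j` with `κ ∤ j`, in any order, attains the bound, its cycles being the blocks of
`κ` consecutive points. Conversely, a word attaining the bound cannot repeat a letter, and if it
omits `s_j` then it preserves `{0, …, j-1}`, a union of cycles, so that `κ ∣ j`. Hence its letters
are exactly the `s_j` with `κ ∤ j`.
-/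

open Equiv

/-! ### Cycles of permutations -/

section Cycles

variable {α ι : Type*}

theorem rel_of_sameCycle {σ : Perm α} {r : Setoid α} (h : ∀ x, r (σ x) x) {x y : α}
    (hxy : σ.SameCycle x y) : r x y := by
  obtain ⟨k, rfl⟩ := hxy
  induction k using Int.induction_on with
  | zero => exact r.refl x
  | succ k ih =>
    rw [add_comm, zpow_one_add, Perm.mul_apply]
    exact r.trans ih (r.symm (h _))
  | pred k ih =>
    refine r.trans ih ?_
    simpa [← Perm.mul_apply, ← zpow_one_add] using h ((σ ^ (-(k : ℤ) - 1)) x)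

theorem rel_swap_apply [DecidableEq α] {r : Setoid α} {a b : α} (h : r a b) (x : α) :
    r (swap a b x) x := by
  rw [swap_apply_def]
  split_ifs with hxa hxb
  · exact hxa ▸ r.symm h
  · exact hxb ▸ h
  · exact r.refl x

theorem rel_prod_swap_apply [DecidableEq α] {r : Setoid α} {a b : ι → α} {l : List ι}
    (h : ∀ j ∈ l, r (a j) (b j)) (x : α) :
    r ((l.map fun j => swap (a j) (b j)).prod x) x := by
  induction l with
  | nil => exact r.refl x
  | cons j l ih =>
    rw [List.forall_mem_cons] at h
    exact r.trans (rel_swap_apply h.1 _) (ih h.2)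

theorem natCard_sameCycle (σ : Perm α) (x : α) :
    Nat.card {y // σ.SameCycle x y} = Function.minimalPeriod σ x := by
  have horbit (y : α) : σ.SameCycle x y ↔ y ∈ MulAction.orbit (Subgroup.zpowers σ) x := by
    rw [MulAction.mem_orbit_iff, Subgroup.exists_zpowers]
    rfl
  rw [Nat.card_congr (Equiv.subtypeEquivRight horbit),
    Nat.card_congr (MulAction.orbitZPowersEquiv σ x), Nat.card_zmod]
  rfl

/-- The number of cycles of a permutation of a finite type, each fixed point being counted as a
cycle. -/
def numCycles (σ : Perm α) : ℕ := Nat.card (Quotient (Perm.SameCycle.setoid σ))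

/-- Rational functions on `α` are determined by their differences along the transpositions together
with their values at one point of each cycle. -/
theorem natCard_le_card_toFinset_add_numCycles [Finite α] [DecidableEq α] [DecidableEq ι]
    (a b : ι → α) (l : List ι) :
    Nat.card α ≤ l.toFinset.card + numCycles (l.map fun j => swap (a j) (b j)).prod := by
  have := Fintype.ofFinite α
  set σ := (l.map fun j => swap (a j) (b j)).prod
  have := Fintype.ofFinite (Quotient (Perm.SameCycle.setoid σ))
  let T : (α → ℚ) →ₗ[ℚ] (l.toFinset → ℚ) × (Quotient (Perm.SameCycle.setoid σ) → ℚ) :=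
    (LinearMap.pi fun j : l.toFinset =>
      LinearMap.proj (R := ℚ) (φ := fun _ : α => ℚ) (a j) - LinearMap.proj (b j)).prod
      (LinearMap.funLeft ℚ ℚ Quotient.out)
  have hT : Function.Injective T := by
    rw [injective_iff_map_eq_zero]
    intro f hf
    obtain ⟨hedge, hrep⟩ := Prod.ext_iff.1 hf
    have hconst {x y : α} (hxy : σ.SameCycle x y) : f x = f y := by
      refine rel_of_sameCycle (r := Setoid.ker f) (rel_prod_swap_apply fun j hj => ?_) hxy
      exact sub_eq_zero.1 (congrFun hedge ⟨j, List.mem_toFinset.2 hj⟩)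
    funext x
    rw [hconst (Quotient.mk_out (s := Perm.SameCycle.setoid σ) x).symm]
    exact congrFun hrep ⟦x⟧
  simpa [numCycles, Nat.card_eq_fintype_card, ← List.mem_toFinset, -List.mem_toFinset]
    using LinearMap.finrank_le_finrank_of_injective hT

theorem natCard_le_length_add_numCycles [Finite α] [DecidableEq α] {l : List (Perm α)}
    (hl : ∀ τ ∈ l, τ.IsSwap) : Nat.card α ≤ l.length + numCycles l.prod := by
  classical
  obtain ⟨p, rfl⟩ : l ∈ Set.range (List.map fun p : α × α => swap p.1 p.2) := by
    rw [Set.range_list_map]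
    intro τ hτ
    obtain ⟨x, y, -, rfl⟩ := hl τ hτ
    exact ⟨(x, y), rfl⟩
  refine (natCard_le_card_toFinset_add_numCycles Prod.fst Prod.snd p).trans ?_
  simpa using p.toFinset_card_le

end Cycles

/-! ### Permutations with cycles of equal length -/

/-- All cycles of `σ` have length `κ`, each fixed point being a cycle of length one; `κ = 0` stands
for infinite cycles. -/
def UniformCycles {α : Type*} (σ : Perm α) (κ : ℕ) : Prop :=
  ∀ x, Function.minimalPeriod σ x = κ

theorem minimalPeriod_eq_of_semiconj {α β : Type*} {f : α → α} {g : β → β} {h : α → β}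
    (hfg : Function.Semiconj h f g) (hinj : Function.Injective h) (x : α) :
    Function.minimalPeriod g (h x) = Function.minimalPeriod f x := by
  refine Function.minimalPeriod_eq_minimalPeriod_iff.2 fun n => ?_
  rw [Function.IsPeriodicPt, Function.IsFixedPt, ← (hfg.iterate_right n).eq, hinj.eq_iff]
  rfl

namespace UniformCycles

variable {α : Type*} {σ τ : Perm α} {κ : ℕ}

theorem conj (h : UniformCycles σ κ) (τ : Perm α) : UniformCycles (τ * σ * τ⁻¹) κ := by
  intro x
  rw [← τ.apply_symm_apply x, ← h (τ.symm x)]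
  exact minimalPeriod_eq_of_semiconj (fun y => by simp) τ.injective _

theorem of_isConj (h : UniformCycles σ κ) (hστ : IsConj σ τ) : UniformCycles τ κ := by
  obtain ⟨π, rfl⟩ := isConj_iff.1 hστ
  exact h.conj π

theorem pow [Finite α] (h : UniformCycles σ κ) (i : ℕ) :
    UniformCycles (σ ^ i) (κ / κ.gcd i) := by
  intro x
  rw [Perm.coe_pow, Function.minimalPeriod_iterate_eq_div_gcd'
    (σ.injective.mem_periodicPts x), h x]

theorem numCycles_mul [Finite α] (h : UniformCycles σ κ) : numCycles σ * κ = Nat.card α := by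
  have := Fintype.ofFinite (Quotient (Perm.SameCycle.setoid σ))
  rw [numCycles, Nat.card_congr (Equiv.sigmaFiberEquiv
    (Quotient.mk (Perm.SameCycle.setoid σ))).symm, Nat.card_sigma, Finset.sum_const_nat (m := κ),
    Finset.card_univ, Nat.card_eq_fintype_card]
  intro q _
  rw [← h q.out, ← natCard_sameCycle]
  refine Nat.card_congr (Equiv.subtypeEquivRight fun y => ?_)
  rw [Quotient.mk_eq_iff_out]
  exact Perm.sameCycle_comm

theorem numCycles_eq [Finite α] [Nonempty α] (h : UniformCycles σ κ) :
    numCycles σ = Nat.card α / κ := by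
  rw [← h.numCycles_mul, Nat.mul_div_cancel _ ?_]
  exact Nat.pos_of_mul_pos_left (h.numCycles_mul ▸ Nat.card_pos)

theorem dvd_card_of_apply_mem_iff [Finite α] (h : UniformCycles σ κ) {A : Finset α}
    (hA : ∀ x, σ x ∈ A ↔ x ∈ A) : κ ∣ A.card := by
  have hsub : UniformCycles (σ.subtypePerm hA) κ := fun x => by
    rw [← h x]
    exact (minimalPeriod_eq_of_semiconj (h := ((↑) : A → α)) (fun _ => rfl)
      Subtype.val_injective x).symm
  simpa using Dvd.intro_left _ hsub.numCycles_mul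

theorem eq_of_mem_cycleType [Fintype α] [DecidableEq α] (h : UniformCycles σ κ) {m : ℕ}
    (hm : m ∈ σ.cycleType) : m = κ := by
  rw [Perm.cycleType_def, Multiset.mem_map] at hm
  obtain ⟨c, hc, rfl⟩ := hm
  obtain ⟨x, hx⟩ := (Perm.mem_cycleFactorsFinset_iff.1 hc).1.nonempty_support
  have hσx : σ x ≠ x := Perm.mem_support.1 (Perm.mem_cycleFactorsFinset_support_le hc hx)
  rw [← h x, ← natCard_sameCycle, Perm.cycle_is_cycleOf hx hc, Function.comp_apply,
    Nat.subtype_card _ fun y => Perm.mem_support_cycleOf_iff' hσx]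

theorem cycleType_eq_replicate [Fintype α] [DecidableEq α] (h : UniformCycles σ κ) (hκ : κ ≠ 1) :
    σ.cycleType = Multiset.replicate (Fintype.card α / κ) κ := by
  have hsupport : σ.support = Finset.univ := by
    refine Finset.eq_univ_iff_forall.2 fun x => Perm.mem_support.2 fun hx => hκ ?_
    rw [← h x, Function.minimalPeriod_eq_one_iff_isFixedPt.2 hx]
  have hrep := Multiset.eq_replicate_card.2 fun m => h.eq_of_mem_cycleType (m := m)
  have hsum := σ.sum_cycleType
  rw [hsupport, Finset.card_univ, hrep, Multiset.sum_replicate, smul_eq_mul] at hsum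
  rcases Nat.eq_zero_or_pos κ with rfl | hpos
  · rw [Nat.div_zero, Multiset.replicate_zero]
    refine Multiset.eq_zero_of_forall_notMem fun m hm => ?_
    exact absurd (Perm.two_le_of_mem_cycleType hm) (by rw [h.eq_of_mem_cycleType hm]; omega)
  · rwa [← hsum, Nat.mul_div_cancel _ hpos]

theorem isConj [Finite α] (hσ : UniformCycles σ κ) (hτ : UniformCycles τ κ) : IsConj σ τ := by
  classical
  have := Fintype.ofFinite α
  by_cases hκ : κ = 1
  · have eq_one {ρ : Perm α} (hρ : UniformCycles ρ κ) : ρ = 1 :=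
      Perm.ext fun x => Function.minimalPeriod_eq_one_iff_isFixedPt.1 ((hρ x).trans hκ)
    rw [eq_one hσ, eq_one hτ]
  · rw [Perm.isConj_iff_cycleType_eq, hσ.cycleType_eq_replicate hκ, hτ.cycleType_eq_replicate hκ]

end UniformCycles

/-! ### Products of adjacent transpositions -/

section AdjacentTranspositions

/-- The cycle of `a` under `swap a b * σ` cannot close up inside `A` before it reaches `b`. -/
theorem sameCycle_swap_mul {α : Type*} [Finite α] [DecidableEq α] {σ : Perm α} {A : Set α}
    (hA : ∀ x ∈ A, σ x ∈ A) {a b : α} (ha : a ∈ A) (hb : b ∉ A) :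
    (swap a b * σ).SameCycle a b := by
  by_contra hab
  set τ := swap a b * σ with hτ
  have hstep (k : ℕ) (hk : (τ ^ k) a ∈ A) : (τ ^ (k + 1)) a ∈ A \ {a} := by
    have hσ : σ ((τ ^ k) a) = swap a b ((τ ^ (k + 1)) a) := by
      rw [pow_succ', Perm.mul_apply, hτ, Perm.mul_apply, swap_apply_self]
    have hmem := hσ ▸ hA _ hk
    have hne_b : (τ ^ (k + 1)) a ≠ b := fun h => hab ⟨(k + 1 : ℕ), h⟩
    have hne_a : (τ ^ (k + 1)) a ≠ a := fun h => hb (by rwa [h, swap_apply_left] at hmem)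
    rw [swap_apply_of_ne_of_ne hne_a hne_b] at hmem
    exact ⟨hmem, hne_a⟩
  have hmem (k : ℕ) : (τ ^ k) a ∈ A := by
    induction k with
    | zero => exact ha
    | succ k ih => exact (hstep k ih).1
  obtain ⟨k, hk⟩ := Nat.exists_eq_succ_of_ne_zero (orderOf_pos τ).ne'
  exact (hstep k (hmem k)).2 (by rw [← Nat.succ_eq_add_one, ← hk, pow_orderOf_eq_one]; rfl)

variable {n κ : ℕ} {l : List (Fin n)}

/-- The product of the adjacent transpositions `(j j+1)` of `{0, …, n}`, for `j` running through
the word `l`. -/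
def adjSwapProd (l : List (Fin n)) : Perm (Fin (n + 1)) :=
  (l.map fun j => swap j.castSucc j.succ).prod

theorem adjSwapProd_cons (j : Fin n) (l : List (Fin n)) :
    adjSwapProd (j :: l) = swap j.castSucc j.succ * adjSwapProd l :=
  rfl

theorem adjSwapProd_apply_le_iff {j : Fin n} (hj : j ∉ l) (x : Fin (n + 1)) :
    adjSwapProd l x ≤ j.castSucc ↔ x ≤ j.castSucc := by
  refine iff_of_eq (rel_prod_swap_apply (r := Setoid.ker (· ≤ j.castSucc)) (fun k hk => ?_) x)
  have hkj : k ≠ j := fun h => hj (h ▸ hk)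
  simp only [Setoid.ker_def, eq_iff_iff, Fin.le_def, Fin.val_castSucc, Fin.val_succ]
  omega

theorem sameCycle_adjSwapProd (hl : l.Nodup) {j : Fin n} (hj : j ∈ l) :
    (adjSwapProd l).SameCycle j.castSucc j.succ := by
  induction l with
  | nil => simp at hj
  | cons k l ih =>
    obtain ⟨hk, hl⟩ := List.nodup_cons.1 hl
    have hhead : (adjSwapProd (k :: l)).SameCycle k.castSucc k.succ :=
      sameCycle_swap_mul (A := Set.Iic k.castSucc)
        (fun x hx => (adjSwapProd_apply_le_iff hk x).2 hx) Set.self_mem_Iic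
        k.castSucc_lt_succ.not_ge
    rcases List.mem_cons.1 hj with rfl | hj
    · exact hhead
    · refine rel_of_sameCycle (r := Perm.SameCycle.setoid _) (fun x => ?_) (ih hl hj)
      have hswap := rel_swap_apply (r := Perm.SameCycle.setoid _) hhead (adjSwapProd l x)
      exact (Setoid.symm' _ hswap).trans (Perm.sameCycle_apply_left.2 (Perm.SameCycle.refl _ x))

/-- `l` lists once each the zero-based indices `j` whose Bourbaki label `j + 1` is not divisible
by `κ`; the corresponding words in the simple reflections represent the Coxeter elements of the
parabolic subgroup generated by these reflections. -/
structure IsCoxeterWord (κ : ℕ) (l : List (Fin n)) : Prop where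
  nodup : l.Nodup
  mem_iff : ∀ j : Fin n, j ∈ l ↔ ¬ κ ∣ (j : ℕ) + 1

theorem exists_isCoxeterWord (n κ : ℕ) : ∃ l : List (Fin n), IsCoxeterWord κ l :=
  ⟨(Finset.univ.filter fun j : Fin n => ¬ κ ∣ (j : ℕ) + 1).toList, Finset.nodup_toList _, by simp⟩

theorem isCoxeterWord_finRange (n : ℕ) : IsCoxeterWord (n + 1) (List.finRange n) where
  nodup := List.nodup_finRange n
  mem_iff j := by simpa using Nat.not_dvd_of_pos_of_lt j.val.succ_pos (by omega)

theorem card_filter_not_dvd_succ (hκ : κ ∣ n + 1) :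
    (Finset.univ.filter fun j : Fin n => ¬ κ ∣ (j : ℕ) + 1).card = n + 1 - (n + 1) / κ := by
  have hdvd : (Finset.univ.filter fun j : Fin n => κ ∣ (j : ℕ) + 1).card = n / κ := by
    rw [Finset.card_filter, Fin.sum_univ_eq_sum_range fun e => if κ ∣ e + 1 then 1 else 0,
      ← Finset.card_filter, Nat.card_multiples]
  have hadd := Finset.card_filter_add_card_filter_not (s := (Finset.univ : Finset (Fin n)))
    fun j : Fin n => κ ∣ (j : ℕ) + 1
  rw [hdvd, Finset.card_univ, Fintype.card_fin] at hadd
  rw [Nat.succ_div_of_dvd hκ]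
  omega

theorem natCard_div_eq_div {N : ℕ} (hκ : κ ∣ N) (x : Fin N) :
    Nat.card {y : Fin N // (x : ℕ) / κ = y / κ} = κ := by
  have hpos : 0 < κ := Nat.pos_of_dvd_of_pos hκ x.pos
  have hle : κ * (x / κ) + κ ≤ N := by
    calc κ * (x / κ) + κ = κ * (x / κ + 1) := (Nat.mul_succ _ _).symm
      _ ≤ κ * (N / κ) := Nat.mul_le_mul_left κ (Nat.div_lt_div_of_lt_of_dvd hκ x.2)
      _ = N := Nat.mul_div_cancel' hκ
  rw [Nat.subtype_card ((Finset.Ico (κ * (x / κ)) (κ * (x / κ) + κ)).attachFin fun z hz => by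
    have := Finset.mem_Ico.1 hz
    omega), Finset.card_attachFin, Nat.card_Ico, Nat.add_sub_cancel_left]
  intro y
  rw [Finset.mem_attachFin, Finset.mem_Ico, eq_comm (a := (x : ℕ) / κ), Nat.div_eq_iff hpos,
    mul_comm κ]
  omega

namespace IsCoxeterWord

theorem length_eq (h : IsCoxeterWord κ l) (hκ : κ ∣ n + 1) :
    l.length = n + 1 - (n + 1) / κ := by
  rw [← card_filter_not_dvd_succ hκ, ← List.toFinset_card_of_nodup h.nodup]
  congr 1
  ext j
  simp [h.mem_iff]

theorem sameCycle_of_div_eq_div (h : IsCoxeterWord κ l) {x y : Fin (n + 1)} (hxy : x ≤ y)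
    (hdiv : (x : ℕ) / κ = y / κ) : (adjSwapProd l).SameCycle x y := by
  induction y using Fin.induction with
  | zero => rw [Fin.le_zero_iff.1 hxy]
  | succ j ih =>
    rcases hxy.eq_or_lt with rfl | hlt
    · exact Perm.SameCycle.refl _ _
    · have hxj : x ≤ j.castSucc := Fin.le_castSucc_iff.2 hlt
      have hle : (x : ℕ) / κ ≤ j / κ := Nat.div_le_div_right hxj
      rw [Fin.val_succ, Nat.succ_div] at hdiv
      have hj : ¬ κ ∣ (j : ℕ) + 1 := fun hdvd => by rw [if_pos hdvd] at hdiv; omega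
      rw [if_neg hj] at hdiv
      exact (ih hxj hdiv).trans (sameCycle_adjSwapProd h.nodup ((h.mem_iff j).2 hj))

theorem sameCycle_iff (h : IsCoxeterWord κ l) {x y : Fin (n + 1)} :
    (adjSwapProd l).SameCycle x y ↔ (x : ℕ) / κ = y / κ := by
  refine ⟨fun hxy => ?_, fun hdiv => ?_⟩
  · refine rel_of_sameCycle (r := Setoid.ker fun z : Fin (n + 1) => (z : ℕ) / κ)
      (rel_prod_swap_apply fun j hj => ?_) hxy
    exact (Nat.succ_div_of_not_dvd ((h.mem_iff j).1 hj)).symm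
  · rcases le_total x y with hxy | hyx
    · exact h.sameCycle_of_div_eq_div hxy hdiv
    · exact (h.sameCycle_of_div_eq_div hyx hdiv.symm).symm

theorem uniformCycles (h : IsCoxeterWord κ l) (hκ : κ ∣ n + 1) :
    UniformCycles (adjSwapProd l) κ := by
  intro x
  rw [← natCard_sameCycle, ← natCard_div_eq_div hκ x]
  exact Nat.card_congr (Equiv.subtypeEquivRight fun y => h.sameCycle_iff)

end IsCoxeterWord

theorem UniformCycles.isCoxeterWord (h : UniformCycles (adjSwapProd l) κ)
    (hlen : l.length ≤ n + 1 - (n + 1) / κ) : IsCoxeterWord κ l := by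
  have hκ : κ ∣ n + 1 := by simpa using Dvd.intro_left _ h.numCycles_mul
  have hcard := natCard_le_card_toFinset_add_numCycles Fin.castSucc Fin.succ l
  rw [← adjSwapProd, h.numCycles_eq, Nat.card_fin] at hcard
  have hdvd {j : Fin n} (hj : j ∉ l) : κ ∣ (j : ℕ) + 1 := by
    simpa using h.dvd_card_of_apply_mem_iff (A := Finset.Iic j.castSucc) (by
      simpa using adjSwapProd_apply_le_iff hj)
  have hle := l.toFinset_card_le
  refine ⟨?_, ?_⟩
  · rw [← Multiset.coe_nodup, ← Multiset.toFinset_card_eq_card_iff_nodup]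
    exact hle.antisymm (hlen.trans (Nat.sub_le_iff_le_add.2 hcard))
  · have hJ : (Finset.univ.filter fun j : Fin n => ¬ κ ∣ (j : ℕ) + 1) = l.toFinset := by
      refine Finset.eq_of_subset_of_card_le (fun j hj => ?_) ?_
      · rw [List.mem_toFinset]
        exact not_imp_comm.1 hdvd (Finset.mem_filter.1 hj).2
      · exact hle.trans (hlen.trans (card_filter_not_dvd_succ hκ).ge)
    intro j
    rw [← List.mem_toFinset, ← hJ, Finset.mem_filter_univ]

end AdjacentTranspositions

/-! ### The Weyl group of type `Aₙ` as a symmetric group -/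

section SymmetricGroup

theorem isLiftable_swap_castSucc_succ (n : ℕ) :
    (CoxeterMatrix.A n).IsLiftable fun j : Fin n => swap j.castSucc j.succ := by
  have hthree {a b c : Fin (n + 1)} (hab : a ≠ b) (hac : a ≠ c) (hbc : b ≠ c) :
      (swap a b * swap a c) ^ 3 = 1 := by
    rw [← (Perm.isThreeCycle_swap_mul_swap_same hab hac hbc).orderOf, pow_orderOf_eq_one]
  intro i j
  simp only [CoxeterMatrix.A, Matrix.of_apply]
  split_ifs with hij hadj
  · simp [hij]
  · rcases hadj with hji | hij
    · have hj : j.succ = i.castSucc := Fin.ext (by simpa using hji)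
      rw [swap_comm j.castSucc, hj]
      refine hthree ?_ ?_ ?_ <;> simp only [ne_eq, Fin.ext_iff, Fin.val_castSucc, Fin.val_succ] <;>
        omega
    · have hi : i.succ = j.castSucc := Fin.ext (by simpa using hij)
      rw [swap_comm i.castSucc, hi]
      refine hthree ?_ ?_ ?_ <;> simp only [ne_eq, Fin.ext_iff, Fin.val_castSucc, Fin.val_succ] <;>
        omega
  · have hcomm : Commute (swap i.castSucc i.succ) (swap j.castSucc j.succ) := by
      refine (Perm.disjoint_swap_swap ?_).commute
      simp only [List.nodup_cons, List.mem_cons, Fin.ext_iff, Fin.val_castSucc, Fin.val_succ,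
        List.not_mem_nil, or_false, List.nodup_nil, not_false_eq_true, and_true, not_or] at hij ⊢
      omega
    rw [hcomm.mul_pow, sq, sq, swap_mul_self, swap_mul_self, one_mul]

/-- The action of the Weyl group of type `Aₙ` on `{0, …, n}`, with `s_{j+1}` acting as the
transposition `(j j+1)`. -/
def permHom (n : ℕ) : WA n →* Perm (Fin (n + 1)) :=
  (csA n).lift ⟨fun j => swap j.castSucc j.succ, isLiftable_swap_castSucc_succ n⟩

theorem permHom_simple (n : ℕ) (j : Fin n) :
    permHom n ((csA n).simple j) = swap j.castSucc j.succ :=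
  (csA n).lift_apply_simple _ _

theorem permHom_wordProd {n : ℕ} (l : List (Fin n)) :
    permHom n ((csA n).wordProd l) = adjSwapProd l := by
  induction l with
  | nil => exact map_one _
  | cons j l ih =>
    rw [CoxeterSystem.wordProd_cons, map_mul, permHom_simple, ih, adjSwapProd_cons]

theorem commute_simple {n : ℕ} {i j : Fin n} (h : (i : ℕ) + 1 < j) :
    Commute ((csA n).simple i) ((csA n).simple j) := by
  have hM : CoxeterMatrix.A n i j = 2 := by
    simp only [CoxeterMatrix.A, Matrix.of_apply, Fin.ext_iff]
    rw [if_neg (by omega), if_neg (by omega)]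
  have hbraid : (csA n).wordProd (CoxeterSystem.alternatingWord i j (CoxeterMatrix.A n i j)) =
      (csA n).wordProd (CoxeterSystem.alternatingWord j i (CoxeterMatrix.A n j i)) :=
    (csA n).wordProd_braidWord_eq i j
  simpa [commute_iff_eq, (CoxeterMatrix.A n).symmetric j i, hM,
    CoxeterSystem.alternatingWord, CoxeterSystem.wordProd_cons] using hbraid

theorem simple_braid {n : ℕ} (j : Fin n) :
    (csA (n + 1)).simple j.succ * (csA (n + 1)).simple j.castSucc * (csA (n + 1)).simple j.succ =
      (csA (n + 1)).simple j.castSucc * (csA (n + 1)).simple j.succ *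
        (csA (n + 1)).simple j.castSucc := by
  have hM : CoxeterMatrix.A (n + 1) j.castSucc j.succ = 3 := by
    simp [CoxeterMatrix.A, Fin.ext_iff]
  have hbraid : (csA (n + 1)).wordProd (CoxeterSystem.alternatingWord j.castSucc j.succ
        (CoxeterMatrix.A (n + 1) j.castSucc j.succ)) =
      (csA (n + 1)).wordProd (CoxeterSystem.alternatingWord j.succ j.castSucc
        (CoxeterMatrix.A (n + 1) j.succ j.castSucc)) :=
    (csA (n + 1)).wordProd_braidWord_eq j.castSucc j.succ
  simpa [(CoxeterMatrix.A (n + 1)).symmetric j.succ, hM, mul_assoc, CoxeterSystem.alternatingWord,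
    CoxeterSystem.wordProd_cons] using hbraid

/-- The inclusion of the Weyl group of type `Aₙ` in that of type `Aₙ₊₁` as the parabolic subgroup
omitting the last simple reflection. -/
def succHom (n : ℕ) : WA n →* WA (n + 1) :=
  (csA n).lift ⟨fun j => (csA (n + 1)).simple j.castSucc, fun i j => by
    have hM : CoxeterMatrix.A n i j = CoxeterMatrix.A (n + 1) i.castSucc j.castSucc := by
      simp [CoxeterMatrix.A, Fin.ext_iff]
    exact hM ▸ (csA (n + 1)).simple_mul_simple_pow i.castSucc j.castSucc⟩

theorem succHom_simple (n : ℕ) (j : Fin n) :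
    succHom n ((csA n).simple j) = (csA (n + 1)).simple j.castSucc :=
  (csA n).lift_apply_simple _ _

theorem permHom_succHom_castSucc {n : ℕ} (w : WA n) (x : Fin (n + 1)) :
    permHom (n + 1) (succHom n w) x.castSucc = (permHom n w x).castSucc := by
  induction w using (csA n).simple_induction_left generalizing x with
  | one => simp
  | mul_simple_left w j ih =>
    simp only [map_mul, succHom_simple, permHom_simple, Perm.mul_apply, ih]
    rw [← Fin.castSucc_succ, (Fin.castSucc_injective (n + 1)).swap_apply]

theorem permHom_succHom_last {n : ℕ} (w : WA n) :
    permHom (n + 1) (succHom n w) (Fin.last (n + 1)) = Fin.last (n + 1) := by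
  induction w using (csA n).simple_induction_left with
  | one => simp
  | mul_simple_left w j ih =>
    simp only [map_mul, succHom_simple, permHom_simple, Perm.mul_apply, ih]
    rw [← Fin.castSucc_succ]
    exact swap_apply_of_ne_of_ne (Fin.castSucc_ne_last _).symm (Fin.castSucc_ne_last _).symm

/-- The product `s_k ⋯ s_n` (zero-based indices) of the last simple reflections of type `Aₙ₊₁`;
these are the minimal representatives of the left cosets of the image of `succHom n`. -/
def cosetRep (n : ℕ) (k : Fin (n + 2)) : WA (n + 1) :=
  (csA (n + 1)).wordProd ((List.finRange (n + 1)).drop k)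

theorem cosetRep_last (n : ℕ) : cosetRep n (Fin.last (n + 1)) = 1 := by
  rw [cosetRep, List.drop_eq_nil_of_le (by simp), CoxeterSystem.wordProd_nil]

theorem cosetRep_castSucc {n : ℕ} (i : Fin (n + 1)) :
    cosetRep n i.castSucc = (csA (n + 1)).simple i * cosetRep n i.succ := by
  rw [cosetRep, Fin.val_castSucc, List.drop_eq_getElem_cons (by simpa using i.is_lt),
    List.getElem_finRange, CoxeterSystem.wordProd_cons]
  rfl

theorem permHom_cosetRep_last {n : ℕ} (k : Fin (n + 2)) :
    permHom (n + 1) (cosetRep n k) (Fin.last (n + 1)) = k := by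
  induction k using Fin.reverseInduction with
  | last => rw [cosetRep_last, map_one, Perm.one_apply]
  | cast i ih =>
    rw [cosetRep_castSucc, map_mul, Perm.mul_apply, ih, permHom_simple, swap_apply_right]

theorem commute_simple_cosetRep {n : ℕ} {j : Fin (n + 1)} {k : Fin (n + 2)}
    (h : (j : ℕ) + 1 < k) : Commute ((csA (n + 1)).simple j) (cosetRep n k) := by
  induction k using Fin.reverseInduction with
  | last => rw [cosetRep_last]; exact Commute.one_right _
  | cast i ih =>
    rw [cosetRep_castSucc]
    exact (commute_simple h).mul_right (ih (h.trans i.castSucc_lt_succ))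

theorem simple_succ_mul_cosetRep {n : ℕ} {j : Fin n} {k : Fin (n + 2)} (h : (k : ℕ) ≤ j) :
    (csA (n + 1)).simple j.succ * cosetRep n k =
      cosetRep n k * (csA (n + 1)).simple j.castSucc := by
  induction k using Fin.reverseInduction with
  | last => exact absurd h (by rw [Fin.val_last]; omega)
  | cast i ih =>
    rcases Nat.lt_or_eq_of_le h with hij | hij
    · rw [cosetRep_castSucc, ← mul_assoc, ← (commute_simple (by simpa using hij)).eq, mul_assoc,
        ih (by simpa using hij), mul_assoc]
    · obtain rfl : i = j.castSucc := Fin.ext (by simpa using hij)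
      have hcomm : Commute ((csA (n + 1)).simple j.castSucc) (cosetRep n j.succ.succ) :=
        commute_simple_cosetRep (by simp)
      rw [cosetRep_castSucc, Fin.succ_castSucc, cosetRep_castSucc, ← mul_assoc, ← mul_assoc,
        simple_braid, mul_assoc, hcomm.eq, mul_assoc, mul_assoc, mul_assoc]

theorem exists_eq_cosetRep_mul_succHom {n : ℕ} (w : WA (n + 1)) :
    ∃ k v, w = cosetRep n k * succHom n v := by
  induction w using (csA (n + 1)).simple_induction_left with
  | one => exact ⟨Fin.last _, 1, by rw [cosetRep_last, map_one, one_mul]⟩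
  | mul_simple_left w j ih =>
    obtain ⟨k, v, rfl⟩ := ih
    rcases lt_trichotomy k j.succ with hlt | rfl | hgt
    · rcases (Fin.le_castSucc_iff.2 hlt).eq_or_lt with rfl | hlt
      · exact ⟨j.succ, v, by
          rw [cosetRep_castSucc, mul_assoc, CoxeterSystem.simple_mul_simple_cancel_left]⟩
      · obtain ⟨i, rfl⟩ := Fin.exists_succ_eq.2 (show j ≠ 0 by rintro rfl; simp at hlt)
        refine ⟨k, (csA n).simple i * v, ?_⟩
        rw [← mul_assoc, simple_succ_mul_cosetRep (Nat.le_of_lt_succ hlt), map_mul,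
          succHom_simple, mul_assoc]
    · exact ⟨j.castSucc, v, by rw [cosetRep_castSucc, mul_assoc]⟩
    · have hj : j ≠ Fin.last n := by
        rintro rfl
        exact (Fin.le_last k).not_gt hgt
      obtain ⟨i, rfl⟩ := Fin.exists_castSucc_eq.2 hj
      refine ⟨k, (csA n).simple i * v, ?_⟩
      rw [← mul_assoc, (commute_simple_cosetRep (show (i.castSucc : ℕ) + 1 < k from hgt)).eq,
        map_mul, succHom_simple, mul_assoc]

theorem permHom_injective (n : ℕ) : Function.Injective (permHom n) := by
  rw [injective_iff_map_eq_one]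
  induction n with
  | zero =>
    intro w _
    induction w using (csA 0).simple_induction_left with
    | one => rfl
    | mul_simple_left w j => exact j.elim0
  | succ n ih =>
    intro w hw
    obtain ⟨k, v, rfl⟩ := exists_eq_cosetRep_mul_succHom w
    obtain rfl : k = Fin.last (n + 1) := by
      rw [← permHom_cosetRep_last k, ← permHom_succHom_last v, ← Perm.mul_apply, ← map_mul, hw,
        Perm.one_apply, permHom_succHom_last]
    rw [cosetRep_last, one_mul] at hw ⊢
    rw [ih v (Equiv.ext fun x => Fin.castSucc_injective _ ?_), map_one]
    rw [← permHom_succHom_castSucc, hw]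
    rfl

theorem permHom_surjective (n : ℕ) : Function.Surjective (permHom n) := by
  rw [← MonoidHom.mrange_eq_top, eq_top_iff, ← Perm.mclosure_swap_castSucc_succ,
    Submonoid.closure_le]
  rintro _ ⟨j, rfl⟩
  exact ⟨_, permHom_simple n j⟩

theorem isConj_permHom_iff {n : ℕ} {v w : WA n} :
    IsConj (permHom n v) (permHom n w) ↔ IsConj v w := by
  refine ⟨fun h => ?_, (permHom n).map_isConj⟩
  obtain ⟨τ, hτ⟩ := isConj_iff.1 h
  obtain ⟨u, rfl⟩ := permHom_surjective n τ
  exact isConj_iff.2 ⟨u, permHom_injective n (by rw [map_mul, map_mul, map_inv, hτ])⟩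

theorem isSwap_permHom {n : ℕ} {t : WA n} (ht : (csA n).IsReflection t) :
    (permHom n t).IsSwap := by
  obtain ⟨w, j, rfl⟩ := ht
  rw [map_mul, map_mul, map_inv, permHom_simple, ← swap_apply_apply]
  exact ⟨_, _, (permHom n w).injective.ne j.castSucc_lt_succ.ne, rfl⟩

end SymmetricGroup

/-! ### Lengths in the conjugacy class -/

section Lengths

variable {n κ i : ℕ} {v : WA n}

theorem uniformCycles_segA_pow (n i : ℕ) :
    UniformCycles (permHom n (segA n 1 n ^ i)) ((n + 1) / (n + 1).gcd i) := by
  have hseg : segA n 1 n = (csA n).wordProd (List.finRange n) := by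
    rw [segA, CoxeterSystem.wordProd, List.filter_eq_self.2 (by simp)]
  rw [hseg, map_pow, permHom_wordProd]
  exact ((isCoxeterWord_finRange n).uniformCycles dvd_rfl).pow i

theorem isConj_segA_pow_iff :
    IsConj (segA n 1 n ^ i) v ↔ UniformCycles (permHom n v) ((n + 1) / (n + 1).gcd i) := by
  rw [← isConj_permHom_iff]
  exact ⟨(uniformCycles_segA_pow n i).of_isConj, (uniformCycles_segA_pow n i).isConj⟩

theorem exists_isReflection_prod_eq (v : WA n) : ∃ l : List (WA n),
    (∀ t ∈ l, (csA n).IsReflection t) ∧ l.length = (csA n).length v ∧ v = l.prod := by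
  obtain ⟨l, hl, rfl⟩ := (csA n).exists_isReduced v
  refine ⟨l.map (csA n).simple, fun t ht => ?_, ?_, rfl⟩
  · obtain ⟨j, -, rfl⟩ := List.mem_map.1 ht
    exact (csA n).isReflection_simple j
  · rw [List.length_map, hl.eq]

theorem reflLenA_le_length (v : WA n) : reflLenA n v ≤ (csA n).length v :=
  Nat.sInf_le (exists_isReflection_prod_eq v)

theorem UniformCycles.le_reflLenA (h : UniformCycles (permHom n v) κ) :
    n + 1 - (n + 1) / κ ≤ reflLenA n v := by
  refine le_csInf ⟨_, exists_isReflection_prod_eq v⟩ ?_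
  rintro _ ⟨l, hl, rfl, hv⟩
  have hswap : ∀ τ ∈ l.map (permHom n), τ.IsSwap := by
    simpa using fun t ht => isSwap_permHom (hl t ht)
  have hle := natCard_le_length_add_numCycles hswap
  rw [← map_list_prod, ← hv, h.numCycles_eq, Nat.card_fin, List.length_map] at hle
  exact Nat.sub_le_iff_le_add.2 hle

theorem IsCoxeterWord.uniformCycles_permHom {l : List (Fin n)} (h : IsCoxeterWord κ l)
    (hκ : κ ∣ n + 1) : UniformCycles (permHom n ((csA n).wordProd l)) κ := by
  rw [permHom_wordProd]
  exact h.uniformCycles hκ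

theorem IsCoxeterWord.length_wordProd_le {l : List (Fin n)} (h : IsCoxeterWord κ l)
    (hκ : κ ∣ n + 1) : (csA n).length ((csA n).wordProd l) ≤ n + 1 - (n + 1) / κ :=
  ((csA n).length_wordProd_le l).trans (h.length_eq hκ).le

theorem isLeast_length (hκ : κ ∣ n + 1) :
    IsLeast {k | ∃ v : WA n, UniformCycles (permHom n v) κ ∧ k = (csA n).length v}
      (n + 1 - (n + 1) / κ) := by
  obtain ⟨l, hl⟩ := exists_isCoxeterWord n κ
  have hw := hl.uniformCycles_permHom hκ
  refine ⟨⟨_, hw, ?_⟩, ?_⟩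
  · exact (hw.le_reflLenA.trans (reflLenA_le_length _)).antisymm (hl.length_wordProd_le hκ)
  · rintro _ ⟨v, hv, rfl⟩
    exact hv.le_reflLenA.trans (reflLenA_le_length v)

theorem isLeast_reflLenA (hκ : κ ∣ n + 1) :
    IsLeast {k | ∃ v : WA n, UniformCycles (permHom n v) κ ∧ k = reflLenA n v}
      (n + 1 - (n + 1) / κ) := by
  obtain ⟨v, hv, hlen⟩ := (isLeast_length hκ).1
  refine ⟨⟨v, hv, ?_⟩, ?_⟩
  · exact hv.le_reflLenA.antisymm (hlen ▸ reflLenA_le_length v)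
  · rintro _ ⟨w, hw, rfl⟩
    exact hw.le_reflLenA

theorem length_minimal_iff (hκ : κ ∣ n + 1) :
    (UniformCycles (permHom n v) κ ∧
      ∀ u, UniformCycles (permHom n u) κ → (csA n).length v ≤ (csA n).length u) ↔
      ∃ l, IsCoxeterWord κ l ∧ v = (csA n).wordProd l := by
  constructor
  · rintro ⟨hv, hmin⟩
    obtain ⟨u, hu, hlen⟩ := (isLeast_length hκ).1
    obtain ⟨l, hl, rfl⟩ := (csA n).exists_isReduced v
    rw [permHom_wordProd] at hv
    refine ⟨l, hv.isCoxeterWord ?_, rfl⟩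
    rw [← hl.eq, hlen]
    exact hmin u hu
  · rintro ⟨l, hl, rfl⟩
    exact ⟨hl.uniformCycles_permHom hκ, fun u hu =>
      (hl.length_wordProd_le hκ).trans ((isLeast_length hκ).2 ⟨u, hu, rfl⟩)⟩

end Lengths

theorem typeA_min_length_conjugacy_class_general (n i : ℕ) :
    {w : WA n | IsConj ((segA n 1 n) ^ i) w ∧
        ∀ v : WA n, IsConj ((segA n 1 n) ^ i) v → (csA n).length w ≤ (csA n).length v}
      = {w : WA n | ∃ l : List (Fin n), l.Nodup ∧
          (∀ j : Fin n, j ∈ l ↔ ¬ ((n + 1) / Nat.gcd (n + 1) i ∣ (j : ℕ) + 1)) ∧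
          w = (csA n).wordProd l} ∧
    (Finset.univ.filter fun j : Fin n =>
        ¬ ((n + 1) / Nat.gcd (n + 1) i ∣ (j : ℕ) + 1)).card = n + 1 - Nat.gcd (n + 1) i ∧
    sInf {k : ℕ | ∃ v : WA n, IsConj ((segA n 1 n) ^ i) v ∧ k = (csA n).length v}
      = n + 1 - Nat.gcd (n + 1) i ∧
    sInf {k : ℕ | ∃ v : WA n, IsConj ((segA n 1 n) ^ i) v ∧ k = reflLenA n v}
      = n + 1 - Nat.gcd (n + 1) i := by
  have hdvd : (n + 1).gcd i ∣ n + 1 := Nat.gcd_dvd_left _ _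
  have hκ : (n + 1) / (n + 1).gcd i ∣ n + 1 := Nat.div_dvd_of_dvd hdvd
  have hgcd : (n + 1) / ((n + 1) / (n + 1).gcd i) = (n + 1).gcd i :=
    Nat.div_div_self hdvd n.succ_ne_zero
  simp only [isConj_segA_pow_iff]
  rw [card_filter_not_dvd_succ hκ, (isLeast_length hκ).csInf_eq, (isLeast_reflLenA hκ).csInf_eq,
    hgcd]
  refine ⟨Set.ext fun w => (length_minimal_iff hκ).trans ?_, rfl, rfl, rfl⟩
  exact ⟨fun ⟨l, hl, hw⟩ => ⟨l, hl.nodup, hl.mem_iff, hw⟩,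
    fun ⟨l, hnodup, hmem, hw⟩ => ⟨l, ⟨hnodup, hmem⟩, hw⟩⟩

/-- In type `Aₙ`, fix `1 ≤ i ≤ n`, let `κ = (n+1)/gcd(n+1,i)` and
`J = {j ∈ {1,…,n} : κ ∤ j}` (Bourbaki labels).  The set of minimal length elements of
the conjugacy class of `(s_1 ⋯ s_n)^i` equals the set of Coxeter elements of the
standard parabolic subgroup `W_J`; the minimal length equals
`|J| = n + 1 − gcd(n+1,i)`, and it also equals the minimal reflection length among
elements of the class. -/
theorem typeA_min_length_conjugacy_class (n i : ℕ) (hi1 : 1 ≤ i) (hin : i ≤ n) :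
    {w : WA n | IsConj ((segA n 1 n) ^ i) w ∧
        ∀ v : WA n, IsConj ((segA n 1 n) ^ i) v → (csA n).length w ≤ (csA n).length v}
      = {w : WA n | ∃ l : List (Fin n), l.Nodup ∧
          (∀ j : Fin n, j ∈ l ↔ ¬ ((n + 1) / Nat.gcd (n + 1) i ∣ (j : ℕ) + 1)) ∧
          w = (csA n).wordProd l} ∧
    (Finset.univ.filter fun j : Fin n =>
        ¬ ((n + 1) / Nat.gcd (n + 1) i ∣ (j : ℕ) + 1)).card = n + 1 - Nat.gcd (n + 1) i ∧
    sInf {k : ℕ | ∃ v : WA n, IsConj ((segA n 1 n) ^ i) v ∧ k = (csA n).length v}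
      = n + 1 - Nat.gcd (n + 1) i ∧
    sInf {k : ℕ | ∃ v : WA n, IsConj ((segA n 1 n) ^ i) v ∧ k = reflLenA n v}
      = n + 1 - Nat.gcd (n + 1) i :=
  typeA_min_length_conjugacy_class_general n i
end
end

section
/- Let W be the Weyl group of type C_n (n ≥ 2) with simple reflections s_1, …, s_n labeled as in Bourbaki. Then w_{n,0}·w_0 = s_n·(s_{n−1}s_n)·(s_{n−2}s_{n−1}s_n)···(s_1 s_2 ⋯ s_n), and the set of elements of minimal length in the conjugacy class of w_{n,0}·w_0 equals the set of Coxeter elements of the standard parabolic subgroup W_J with J = {j ∈ {1,…,n} : j odd}; in particular, the minimal length in this conjugacy class equals ⌈n/2⌉. -/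
noncomputable section
open CoxeterMatrix

/-- The Weyl group of type `Bₙ` (equivalently `Cₙ`), given by its Coxeter
presentation; the Coxeter matrices of types `Bₙ` and `Cₙ` coincide.  Bourbaki labels:
`s_j` (`1 ≤ j ≤ n`) is the simple reflection of index `j - 1`, and the bond of order `4`
joins `s_{n-1}` and `s_n`. -/
abbrev WB (n : ℕ) := (Bₙ n).Group

/-- The canonical Coxeter system of type `Bₙ`/`Cₙ`. -/
def csB (n : ℕ) : CoxeterSystem (Bₙ n) (WB n) := (Bₙ n).toCoxeterSystem

/-- `segB n a b` is the product `s_a s_{a+1} ⋯ s_b` (Bourbaki labels). -/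
def segB (n a b : ℕ) : WB n :=
  (((List.finRange n).filter fun k : Fin n => a ≤ (k : ℕ) + 1 ∧ (k : ℕ) + 1 ≤ b).map
    (csB n).simple).prod

/-- The standard parabolic subgroup of the type-`Bₙ`/`Cₙ` Weyl group generated by all
simple reflections except the one with (zero-based) index `i`. -/
def paraB (n : ℕ) (i : Fin n) : Subgroup (WB n) :=
  Subgroup.closure ((csB n).simple '' {j : Fin n | j ≠ i})

/-! Number the coordinates `1, …, n` and their negatives `0, …, 1 - n`, so that negation becomes
`x ↦ 1 - x` and every simple reflection exchanges neighbours, `s_n` exchanging `0` and `1`. The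
resulting action of `W` is faithful, and `w s < w` means that `w` reverses the two neighbours
exchanged by `s`. Hence `w₀` acts as `x ↦ 1 - x`, `w_{n,0}` as `x ↦ n + 1 - x` on `1, …, n`, and
`w_{n,0} w₀` as the translation by `n` modulo `2n`, which is also how the product formula acts. A
perfect shuffle of `1 - n, …, n` conjugates this half turn into the product of the exchanges
`n - 2i - 1 ↔ n - 2i`, that is, into a Coxeter element of `W_J`.

Conversely a conjugate of the half turn fixes none of these numbers, and for odd `n` it sends some
coordinate to its negative. A word for it therefore contains `s_1`, one of any two consecutive
simple reflections, and `s_n` when `n` is odd. This takes at least `⌈n/2⌉` letters, with equality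
only if the letters are `s_1, s_3, s_5, …`, once each. -/

section Involutions

variable {G : Type*} [Group G] {a b : G}

theorem mul_pow_two_eq_one_iff (ha : a * a = 1) (hb : b * b = 1) :
    (a * b) ^ 2 = 1 ↔ a * b = b * a := by
  rw [pow_two, mul_eq_one_iff_eq_inv, mul_inv_rev, inv_eq_of_mul_eq_one_left ha,
    inv_eq_of_mul_eq_one_left hb]

theorem mul_pow_three_eq_one_iff (ha : a * a = 1) (hb : b * b = 1) :
    (a * b) ^ 3 = 1 ↔ a * b * a = b * a * b := by
  rw [show (a * b) ^ 3 = a * b * a * (b * a * b) by simp only [pow_succ, pow_zero, one_mul,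
    mul_assoc], mul_eq_one_iff_eq_inv]
  simp only [mul_inv_rev, inv_eq_of_mul_eq_one_left ha, inv_eq_of_mul_eq_one_left hb, mul_assoc]

theorem mul_pow_four_eq_one_iff (ha : a * a = 1) (hb : b * b = 1) :
    (a * b) ^ 4 = 1 ↔ a * b * a * b = b * a * b * a := by
  rw [show (a * b) ^ 4 = a * b * a * b * (a * b * a * b) by simp only [pow_succ, pow_zero,
    one_mul, mul_assoc], mul_eq_one_iff_eq_inv]
  simp only [mul_inv_rev, inv_eq_of_mul_eq_one_left ha, inv_eq_of_mul_eq_one_left hb, mul_assoc]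

theorem conj_mul_eq_conj {g x : G} (h : a * g = g * b) :
    (g * x)⁻¹ * a * (g * x) = x⁻¹ * b * x := by
  rw [mul_inv_rev, mul_assoc, mul_assoc, ← mul_assoc a, h, mul_assoc g, inv_mul_cancel_left,
    mul_assoc]

end Involutions

section PermutationProducts

variable {α : Type*} {fs : List (Equiv.Perm α)} {x : α}

theorem prod_apply_of_forall_apply_eq (h : ∀ f ∈ fs, f x = x) : fs.prod x = x :=
  show fs.prod ∈ MulAction.stabilizer (Equiv.Perm α) x from Subgroup.list_prod_mem _ h

theorem prod_apply_of_pairwise_disjoint (hfs : fs.Pairwise Equiv.Perm.Disjoint)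
    {f : Equiv.Perm α} (hf : f ∈ fs) (hx : f x ≠ x) : fs.prod x = f x := by
  induction fs with
  | nil => simp at hf
  | cons g gs ih =>
    rw [List.pairwise_cons] at hfs
    rw [List.prod_cons, Equiv.Perm.mul_apply]
    rcases List.mem_cons.1 hf with rfl | hf
    · rw [prod_apply_of_forall_apply_eq fun g hg => (hfs.1 g hg x).resolve_left hx]
    · rw [ih hfs.2 hf]
      exact (hfs.1 f hf (f x)).resolve_right fun hff => hx (f.injective hff)

end PermutationProducts

theorem eq_add_one_sub_of_lt {f : ℤ → ℤ} {m A : ℤ} (hf : ∀ k, 1 < k → k ≤ m → f k < f (k - 1))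
    (h_one : f 1 ≤ A) (h_last : A + 1 - m ≤ f m) {x : ℤ} (hx : 1 ≤ x) (hxm : x ≤ m) :
    f x = A + 1 - x := by
  have hle : x ≤ m → f x ≤ A + 1 - x := by
    induction x, hx using Int.leInduction with
    | base => omega
    | succ k hk ih =>
      intro hkm
      have := hf (k + 1) (by omega) hkm
      rw [add_sub_cancel_right] at this
      have := ih (by omega) (by omega)
      omega
  have hge : 1 ≤ x → A + 1 - x ≤ f x := by
    clear hle
    induction x, hxm using Int.leInductionDown with
    | base => omega
    | pred k hk ih =>
      intro _
      have := hf k (by omega) hk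
      have := ih (by omega) (by omega)
      omega
  exact le_antisymm (hle hxm) (hge hx)

section SparseCovers

variable {a : ℕ → ℕ} {n : ℕ}

theorem half_le_sum_range (h_zero : 0 < n → 1 ≤ a 0)
    (h_cover : ∀ i, i + 1 < n → 1 ≤ a i + a (i + 1)) :
    (n + 1) / 2 ≤ ∑ i ∈ Finset.range n, a i := by
  induction n using Nat.twoStepInduction with
  | zero => simp
  | one => simpa using h_zero
  | more n ih _ =>
    rw [Finset.sum_range_succ, Finset.sum_range_succ]
    have := ih (fun _ => h_zero (by omega)) fun i hi => h_cover i (by omega)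
    have := h_cover n (by omega)
    omega

theorem eq_ite_even_of_sum_range_le_half (h_zero : 0 < n → 1 ≤ a 0)
    (h_cover : ∀ i, i + 1 < n → 1 ≤ a i + a (i + 1)) (h_last : Odd n → 1 ≤ a (n - 1))
    (h_sum : ∑ i ∈ Finset.range n, a i ≤ (n + 1) / 2) :
    ∀ i < n, a i = if Even i then 1 else 0 := by
  induction n with
  | zero => simp
  | succ n ih =>
    have h_zero' : 0 < n → 1 ≤ a 0 := fun _ => h_zero (by omega)
    have h_cover' (i : ℕ) (hi : i + 1 < n) : 1 ≤ a i + a (i + 1) := h_cover i (by omega)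
    have h_half := half_le_sum_range h_zero' h_cover'
    rw [Finset.sum_range_succ] at h_sum
    rw [Nat.odd_add_one, Nat.not_odd_iff_even, Nat.add_sub_cancel] at h_last
    have h_new : a n = if Even n then 1 else 0 := by
      split_ifs with hn
      · have := h_last hn
        rw [Nat.even_iff] at hn
        omega
      · rw [Nat.even_iff] at hn
        omega
    intro i hi
    rcases (Nat.lt_succ_iff.1 hi).eq_or_lt with rfl | hi
    · exact h_new
    refine ih h_zero' h_cover' (fun hn => ?_) ?_ i hi
    · have hpos := hn.pos
      rw [if_neg (Nat.not_even_iff_odd.2 hn)] at h_new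
      have := h_cover (n - 1) (by omega)
      rwa [Nat.sub_add_cancel hpos, h_new, add_zero] at this
    · split_ifs at h_new with hn <;> rw [Nat.even_iff] at hn <;> omega

theorem sum_range_ite_even (n : ℕ) :
    (∑ i ∈ Finset.range n, if Even i then 1 else 0) = (n + 1) / 2 := by
  induction n with
  | zero => rfl
  | succ n ih =>
    rw [Finset.sum_range_succ, ih]
    split_ifs with hn <;> rw [Nat.even_iff] at hn <;> omega

end SparseCovers

/-- The permutations of `ℤ` commuting with the reflection `x ↦ 1 - x`. Numbering the coordinates
`1, 2, …` and their negatives `0, -1, …`, these are the signed permutations; leaving no gap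
between the two halves makes all simple reflections exchange neighbours. -/
def IsMirrored (σ : Equiv.Perm ℤ) : Prop := ∀ x, σ (1 - x) = 1 - σ x

namespace IsMirrored

variable {σ τ : Equiv.Perm ℤ}

theorem mul (hσ : IsMirrored σ) (hτ : IsMirrored τ) : IsMirrored (σ * τ) := fun x => by
  simp only [Equiv.Perm.mul_apply, hτ x, hσ (τ x)]

theorem ext (hσ : IsMirrored σ) (hτ : IsMirrored τ) (h : ∀ x, 1 ≤ x → σ x = τ x) : σ = τ := by
  refine Equiv.ext fun x => ?_
  rcases le_or_gt 1 x with hx | hx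
  · exact h x hx
  · have hx' := h (1 - x) (by omega)
    rw [hσ, hτ] at hx'
    omega

theorem mapsTo_Icc (hσ : IsMirrored σ) {m : ℤ} (hfix : ∀ x, m < x → σ x = x) :
    Set.MapsTo σ (Set.Icc (1 - m) m) (Set.Icc (1 - m) m) := by
  rintro x ⟨hx₁, hx₂⟩
  by_contra hout
  rw [Set.mem_Icc, not_and_or, not_le, not_le] at hout
  have hσσ : σ (σ x) = σ x := by
    rcases hout with hlt | hgt
    · have := hfix (1 - σ x) (by omega)
      rw [hσ] at this
      omega
    · exact hfix _ hgt
  have := σ.injective hσσ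
  omega

end IsMirrored

/-- The simple reflection of type `C` exchanging the neighbours `k - 1` and `k`, and by symmetry
`1 - k` and `2 - k`. It depends only on `{k, 2 - k}`; the sign change is `k = 1`. -/
def mirrorSwap (k : ℤ) : Equiv.Perm ℤ :=
  Function.Involutive.toPerm
    (fun x => if x = k ∨ x = 2 - k then x - 1 else if x = k - 1 ∨ x = 1 - k then x + 1 else x)
    (fun x => by dsimp only; split_ifs <;> omega)

theorem mirrorSwap_apply (k x : ℤ) : mirrorSwap k x =
    if x = k ∨ x = 2 - k then x - 1 else if x = k - 1 ∨ x = 1 - k then x + 1 else x := rfl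

theorem mirrorSwap_mul_self (k : ℤ) : mirrorSwap k * mirrorSwap k = 1 :=
  Equiv.ext (Function.Involutive.toPerm_involutive _)

theorem mirrorSwap_two_sub (k : ℤ) : mirrorSwap (2 - k) = mirrorSwap k := by
  ext x
  simp only [mirrorSwap_apply]
  split_ifs <;> omega

theorem isMirrored_mirrorSwap (k : ℤ) : IsMirrored (mirrorSwap k) := fun x => by
  simp only [mirrorSwap_apply]
  split_ifs <;> omega

theorem mirrorSwap_apply_pos_iff {k : ℤ} (hk : 2 ≤ k) (x : ℤ) : 1 ≤ mirrorSwap k x ↔ 1 ≤ x := by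
  rw [mirrorSwap_apply]
  split_ifs <;> omega

theorem mirrorSwap_trichotomy (k x : ℤ) :
    mirrorSwap k x = x ∨ mirrorSwap k x = x - 1 ∧ (k = x ∨ k = 2 - x) ∨
      mirrorSwap k x = x + 1 ∧ (k = x + 1 ∨ k = 2 - (x + 1)) := by
  rw [mirrorSwap_apply]
  split_ifs <;> omega

theorem disjoint_mirrorSwap {p q : ℤ} (h : p + 2 ≤ q) (hp : 1 ≤ p) :
    (mirrorSwap q).Disjoint (mirrorSwap p) := fun x => by
  simp only [mirrorSwap_apply]
  split_ifs <;> omega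

theorem eq_sub_one_and_mirrorSwap_eq_of_lt {k x y : ℤ} (hxy : x < y)
    (h : mirrorSwap k y < mirrorSwap k x) : x = y - 1 ∧ mirrorSwap y = mirrorSwap k := by
  suffices x = y - 1 ∧ (y = k ∨ y = 2 - k) by
    refine ⟨this.1, ?_⟩
    rcases this.2 with rfl | rfl
    exacts [rfl, mirrorSwap_two_sub k]
  rw [mirrorSwap_apply, mirrorSwap_apply] at h
  split_ifs at h <;> omega

/-- A mirrored permutation carries the simple root of `k` to that of `σ k` as soon as it maps the
neighbours `k - 1, k` to neighbours in the same order. -/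
theorem IsMirrored.mul_mirrorSwap {σ : Equiv.Perm ℤ} (hσ : IsMirrored σ) {k : ℤ}
    (hk : σ (k - 1) = σ k - 1) : σ * mirrorSwap k = mirrorSwap (σ k) * σ := by
  have hk₁ : σ (1 - k) = 1 - σ k := hσ k
  have hk₂ : σ (2 - k) = 2 - σ k := by
    rw [show 2 - k = 1 - (k - 1) by ring, hσ, hk]
    ring
  ext x
  have hx (y : ℤ) : σ x = σ y ↔ x = y := σ.apply_eq_iff_eq
  have h₁ := hx k
  have h₂ := hx (2 - k)
  have h₃ := hx (k - 1)
  have h₄ := hx (1 - k)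
  rw [hk₂] at h₂
  rw [hk] at h₃
  rw [hk₁] at h₄
  simp only [Equiv.Perm.mul_apply, mirrorSwap_apply, h₁, h₂, h₃, h₄]
  split_ifs with hdown hup
  · rcases hdown with rfl | rfl
    · exact hk
    · rw [show 2 - k - 1 = 1 - k by ring, hk₁, hk₂]
      ring
  · rcases hup with rfl | rfl
    · rw [sub_add_cancel, hk, sub_add_cancel]
    · rw [show 1 - k + 1 = 2 - k by ring, hk₁, hk₂]
      ring
  · rfl

/-- The order of the product of the simple reflections with labels `1 ≤ p < q`, counted from the
special end of the Dynkin diagram. -/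
def bondOrder (p q : ℤ) : ℕ := if p + 2 ≤ q then 2 else if 1 < p then 3 else 4

theorem mirrorSwap_mul_pow {p q : ℤ} (hp : 1 ≤ p) (hpq : p < q) :
    (mirrorSwap q * mirrorSwap p) ^ bondOrder p q = 1 := by
  have hsq := mirrorSwap_mul_self
  unfold bondOrder
  split_ifs with hfar hp₁
  · rw [mul_pow_two_eq_one_iff (hsq q) (hsq p)]
    exact (disjoint_mirrorSwap hfar hp).commute
  · obtain rfl : q = p + 1 := by omega
    rw [mul_pow_three_eq_one_iff (hsq _) (hsq _)]
    have hmap : (mirrorSwap (p + 1) * mirrorSwap p) (p + 1) = p ∧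
        (mirrorSwap (p + 1) * mirrorSwap p) (p + 1 - 1) = p - 1 := by
      simp only [Equiv.Perm.mul_apply, mirrorSwap_apply]
      constructor <;> split_ifs <;> omega
    rw [((isMirrored_mirrorSwap _).mul (isMirrored_mirrorSwap _)).mul_mirrorSwap
      (by rw [hmap.1, hmap.2]), hmap.1, mul_assoc]
  · obtain rfl : p = 1 := by omega
    obtain rfl : q = 2 := by omega
    rw [mul_pow_four_eq_one_iff (hsq _) (hsq _)]
    have hmap : (mirrorSwap 2 * mirrorSwap 1 * mirrorSwap 2) 1 = 1 ∧
        (mirrorSwap 2 * mirrorSwap 1 * mirrorSwap 2) (1 - 1) = 0 := by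
      simp [mirrorSwap_apply]
    rw [(((isMirrored_mirrorSwap _).mul (isMirrored_mirrorSwap _)).mul
      (isMirrored_mirrorSwap _)).mul_mirrorSwap (by rw [hmap.1, hmap.2]; rfl), hmap.1]
    simp only [mul_assoc]

theorem coxeterMatrix_apply_of_lt {n : ℕ} {i j : Fin n} (hij : i < j) :
    CoxeterMatrix.B n i j = bondOrder (n - j) (n - i) := by
  have : (i : ℕ) < j := hij
  have hentry : CoxeterMatrix.B n i j = if i = j then 1
      else if (i : ℕ) = n - 1 ∧ (j : ℕ) = n - 2 ∨ (j : ℕ) = n - 1 ∧ (i : ℕ) = n - 2 then 4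
      else if (j : ℕ) + 1 = i ∨ (i : ℕ) + 1 = j then 3 else 2 := rfl
  rw [hentry, if_neg hij.ne, bondOrder]
  split_ifs <;> omega

theorem isLiftable_mirrorSwap (n : ℕ) :
    (CoxeterMatrix.B n).IsLiftable fun j : Fin n => mirrorSwap (n - j) := by
  have hlt {i j : Fin n} (hij : i < j) :
      (mirrorSwap (n - i) * mirrorSwap (n - j)) ^ CoxeterMatrix.B n i j = 1 := by
    rw [coxeterMatrix_apply_of_lt hij]
    exact mirrorSwap_mul_pow (by omega) (by omega)
  intro i j
  rcases lt_trichotomy i j with hij | rfl | hij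
  · exact hlt hij
  · rw [CoxeterMatrix.diagonal, pow_one, mirrorSwap_mul_self]
  · have hinv (k : ℤ) : (mirrorSwap k)⁻¹ = mirrorSwap k :=
      inv_eq_of_mul_eq_one_left (mirrorSwap_mul_self k)
    have h := hlt hij
    rwa [← inv_inj, ← inv_pow, mul_inv_rev, inv_one, CoxeterMatrix.symmetric, hinv, hinv] at h

/-- The faithful action of the Weyl group of type `C` on `ℤ` by signed permutations, where
the Bourbaki reflection `s_j` exchanges `n - j` and `n - j + 1`. -/
def mirrorRep (n : ℕ) : WB n →* Equiv.Perm ℤ := (csB n).lift ⟨_, isLiftable_mirrorSwap n⟩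

theorem mirrorRep_simple {n : ℕ} (j : Fin n) :
    mirrorRep n ((csB n).simple j) = mirrorSwap (n - j) :=
  (csB n).lift_apply_simple (isLiftable_mirrorSwap n) j

theorem isMirrored_mirrorRep {n : ℕ} (w : WB n) : IsMirrored (mirrorRep n w) := by
  induction w using (csB n).simple_induction_left with
  | one => simp [IsMirrored]
  | mul_simple_left w j ih =>
    rw [map_mul, mirrorRep_simple]
    exact (isMirrored_mirrorSwap _).mul ih

section Faithful

/-- The simple reflection of `WB n` acting as `mirrorSwap p`, for `2 - n ≤ p ≤ n`; this is the
Bourbaki reflection `s_{n + 1 - p}` when `1 ≤ p`. Outside the range the value is `1`. -/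
def edgeSimple (n : ℕ) (p : ℤ) : WB n :=
  if h : 2 - n ≤ p ∧ p ≤ n then (csB n).simple ⟨(n - max p (2 - p)).toNat, by omega⟩ else 1

variable {n : ℕ}

theorem edgeSimple_two_sub (p : ℤ) : edgeSimple n (2 - p) = edgeSimple n p := by
  simp only [edgeSimple, sub_sub_cancel, max_comm (2 - p)]
  exact dite_congr (propext (by omega)) (fun _ => rfl) fun _ => rfl

theorem edgeSimple_congr {k p : ℤ} (h : k = p ∨ k = 2 - p) : edgeSimple n k = edgeSimple n p := by
  rcases h with rfl | rfl
  exacts [rfl, edgeSimple_two_sub p]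

theorem simple_eq_edgeSimple (j : Fin n) : (csB n).simple j = edgeSimple n (n - j) := by
  rw [edgeSimple, dif_pos (by omega)]
  congr 1
  ext
  simp only
  omega

theorem exists_edgeSimple_eq_simple {p : ℤ} (hp : 2 - n ≤ p) (hpn : p ≤ n) :
    ∃ j : Fin n, edgeSimple n p = (csB n).simple j ∧ ((n - j : ℤ) = p ∨ (n - j : ℤ) = 2 - p) :=
  ⟨_, dif_pos ⟨hp, hpn⟩, by simp only; omega⟩

theorem mirrorRep_edgeSimple {p : ℤ} (hp : 2 - n ≤ p) (hpn : p ≤ n) :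
    mirrorRep n (edgeSimple n p) = mirrorSwap p := by
  obtain ⟨j, hj, hjp | hjp⟩ := exists_edgeSimple_eq_simple hp hpn
  · rw [hj, mirrorRep_simple, hjp]
  · rw [hj, mirrorRep_simple, hjp, mirrorSwap_two_sub]

theorem edgeSimple_mul_self (p : ℤ) : edgeSimple n p * edgeSimple n p = 1 := by
  unfold edgeSimple
  split_ifs
  exacts [(csB n).simple_mul_simple_self _, mul_one 1]

theorem edgeSimple_inv (p : ℤ) : (edgeSimple n p)⁻¹ = edgeSimple n p :=
  inv_eq_of_mul_eq_one_left (edgeSimple_mul_self p)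

theorem edgeSimple_mul_pow {p q : ℤ} (hp : 1 ≤ p) (hpq : p < q) (hqn : q ≤ n) :
    (edgeSimple n q * edgeSimple n p) ^ bondOrder p q = 1 := by
  lift p to ℕ using by omega
  lift q to ℕ using by omega
  have hsimple (k : ℕ) (hk : 1 ≤ k ∧ k ≤ n) :
      edgeSimple n k = (csB n).simple ⟨n - k, by omega⟩ := by
    rw [simple_eq_edgeSimple, Nat.cast_sub hk.2, sub_sub_cancel]
  have hlt : (⟨n - q, by omega⟩ : Fin n) < ⟨n - p, by omega⟩ := Fin.mk_lt_mk.2 (by omega)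
  have hbond := coxeterMatrix_apply_of_lt hlt
  rw [Nat.cast_sub (by omega), Nat.cast_sub (by omega), sub_sub_cancel, sub_sub_cancel] at hbond
  rw [hsimple q (by omega), hsimple p (by omega), ← hbond]
  exact (csB n).simple_mul_simple_pow _ _

theorem edgeSimple_mul_comm_of_apply_eq {k p : ℤ} (hk : 2 - n ≤ k) (hkn : k ≤ n) (hp : 2 - n ≤ p)
    (hpn : p ≤ n) (hfix : mirrorSwap k p = p) (hfix' : mirrorSwap k (p - 1) = p - 1) :
    edgeSimple n k * edgeSimple n p = edgeSimple n p * edgeSimple n k := by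
  have hfar {i j : ℤ} (hi : 1 ≤ i) (hij : i + 2 ≤ j) (hj : j ≤ n) :
      edgeSimple n j * edgeSimple n i = edgeSimple n i * edgeSimple n j := by
    rw [← mul_pow_two_eq_one_iff (edgeSimple_mul_self _) (edgeSimple_mul_self _)]
    have h := edgeSimple_mul_pow hi (by omega) hj
    rwa [bondOrder, if_pos hij] at h
  have hmax (i : ℤ) : edgeSimple n i = edgeSimple n (max i (2 - i)) :=
    edgeSimple_congr (by omega)
  have hdist : max p (2 - p) + 2 ≤ max k (2 - k) ∨ max k (2 - k) + 2 ≤ max p (2 - p) := by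
    rw [mirrorSwap_apply] at hfix hfix'
    split_ifs at hfix hfix' <;> omega
  rw [hmax k, hmax p]
  rcases hdist with h | h
  · exact hfar (by omega) h (by omega)
  · exact (hfar (by omega) h (by omega)).symm

theorem edgeSimple_braid {p : ℤ} (hp : 2 - n ≤ p) (hpn : p + 1 ≤ n) (hp₀ : p ≠ 0)
    (hp₁ : p ≠ 1) : edgeSimple n (p + 1) * edgeSimple n p * edgeSimple n (p + 1) =
      edgeSimple n p * edgeSimple n (p + 1) * edgeSimple n p := by
  have hpos {q : ℤ} (hq : 1 < q) (hqn : q + 1 ≤ n) :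
      edgeSimple n (q + 1) * edgeSimple n q * edgeSimple n (q + 1) =
        edgeSimple n q * edgeSimple n (q + 1) * edgeSimple n q := by
    rw [← mul_pow_three_eq_one_iff (edgeSimple_mul_self _) (edgeSimple_mul_self _)]
    have h := edgeSimple_mul_pow hq.le (lt_add_one q) hqn
    rwa [bondOrder, if_neg (by omega), if_pos hq] at h
  rcases lt_or_gt_of_ne hp₁ with hlt | hgt
  · have h := hpos (q := 1 - p) (by omega) (by omega)
    rw [← edgeSimple_two_sub p, ← edgeSimple_two_sub (p + 1),
      show 2 - p = 1 - p + 1 by ring, show 2 - (p + 1) = 1 - p by ring, h]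
  · exact hpos hgt hpn

theorem edgeSimple_braid_four (hn : 2 ≤ n) :
    edgeSimple n 2 * edgeSimple n 1 * edgeSimple n 2 * edgeSimple n 1 =
      edgeSimple n 1 * edgeSimple n 2 * edgeSimple n 1 * edgeSimple n 2 := by
  rw [← mul_pow_four_eq_one_iff (edgeSimple_mul_self _) (edgeSimple_mul_self _)]
  exact edgeSimple_mul_pow (q := 2) le_rfl one_lt_two (by omega)

/-- The parabolic subgroup of type `C_m` at the special end of the Dynkin diagram. -/
def tailPara (n m : ℕ) : Subgroup (WB n) :=
  Subgroup.closure (edgeSimple n '' Set.Icc 1 (m : ℤ))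

theorem edgeSimple_mem_tailPara {m : ℕ} {k : ℤ} (hk : 2 - m ≤ k) (hkm : k ≤ m) :
    edgeSimple n k ∈ tailPara n m := by
  rcases le_or_gt 1 k with hk₁ | hk₁
  · exact Subgroup.subset_closure ⟨k, ⟨hk₁, hkm⟩, rfl⟩
  · exact Subgroup.subset_closure ⟨2 - k, ⟨by omega, by omega⟩, edgeSimple_two_sub k⟩

theorem tailPara_zero : tailPara n 0 = ⊥ := by
  simp [tailPara]

theorem mem_tailPara_self (w : WB n) : w ∈ tailPara n n := by
  induction w using (csB n).simple_induction_left with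
  | one => exact one_mem _
  | mul_simple_left w j ih =>
    rw [simple_eq_edgeSimple]
    exact mul_mem (edgeSimple_mem_tailPara (by omega) (by omega)) ih

theorem mirrorRep_apply_of_mem_tailPara {m : ℕ} (hmn : m ≤ n) {w : WB n} (hw : w ∈ tailPara n m)
    {x : ℤ} (hx : m < x) : mirrorRep n w x = x := by
  suffices tailPara n m ≤ (MulAction.stabilizer (Equiv.Perm ℤ) x).comap (mirrorRep n) from this hw
  rw [tailPara, Subgroup.closure_le]
  rintro _ ⟨k, ⟨hk₁, hkm⟩, rfl⟩
  change mirrorRep n (edgeSimple n k) x = x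
  rw [mirrorRep_edgeSimple (by omega) (by omega), mirrorSwap_apply]
  split_ifs <;> omega

theorem mirrorRep_mapsTo_Icc (w : WB n) :
    Set.MapsTo (mirrorRep n w) (Set.Icc (1 - n) n) (Set.Icc (1 - n) n) :=
  (isMirrored_mirrorRep w).mapsTo_Icc fun _ =>
    mirrorRep_apply_of_mem_tailPara le_rfl (mem_tailPara_self w)

/-- The minimal representative of length `i` of a left coset of `C_{t-1}` in `C_t`, both at the
special end of the Dynkin diagram; it moves `t` down to `t - i`. -/
def tailRep (n : ℕ) (t : ℤ) : ℕ → WB n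
  | 0 => 1
  | i + 1 => edgeSimple n (t - i) * tailRep n t i

theorem mirrorRep_tailRep {t : ℤ} (htn : t ≤ n) {i : ℕ} (hi : i + 1 ≤ 2 * t) :
    mirrorRep n (tailRep n t i) t = t - i := by
  induction i with
  | zero => simp [tailRep]
  | succ i ih =>
    push_cast at hi ⊢
    rw [tailRep, map_mul, Equiv.Perm.mul_apply, ih (by omega),
      mirrorRep_edgeSimple (by omega) (by omega), mirrorSwap_apply]
    split_ifs <;> omega

theorem tailRep_mem_tailPara {m i : ℕ} (hi : i ≤ 2 * m + 1) :
    tailRep n (m + 1) i ∈ tailPara n (m + 1) := by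
  induction i with
  | zero => exact one_mem _
  | succ i ih =>
    exact mul_mem (edgeSimple_mem_tailPara (by omega) (by omega)) (ih (by omega))

theorem conj_tailRep_add_two {t p : ℤ} {i : ℕ} (ht : t - i = p + 1) (hp : 2 - n ≤ p)
    (hpn : p + 1 ≤ n) (hp₀ : p ≠ 0) (hp₁ : p ≠ 1) :
    (tailRep n t (i + 2))⁻¹ * edgeSimple n (p + 1) * tailRep n t (i + 2) =
      (tailRep n t i)⁻¹ * edgeSimple n p * tailRep n t i := by
  have hrep : tailRep n t (i + 2) =
      edgeSimple n p * edgeSimple n (p + 1) * tailRep n t i := by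
    rw [tailRep, tailRep, ht, show t - (i + 1 : ℕ) = p by push_cast; omega, mul_assoc]
  rw [hrep, conj_mul_eq_conj]
  rw [← mul_assoc]
  exact edgeSimple_braid hp hpn hp₀ hp₁

theorem conj_tailRep_add_three {t : ℤ} {i : ℕ} (ht : t - i = 2) (hn : 2 ≤ n) :
    (tailRep n t (i + 3))⁻¹ * edgeSimple n 1 * tailRep n t (i + 3) =
      (tailRep n t i)⁻¹ * edgeSimple n 1 * tailRep n t i := by
  have hrep : tailRep n t (i + 3) =
      edgeSimple n 2 * edgeSimple n 1 * edgeSimple n 2 * tailRep n t i := by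
    rw [tailRep, tailRep, tailRep, ht, show t - (i + 1 : ℕ) = 1 by push_cast; omega,
      show t - (i + 2 : ℕ) = 2 - 2 by push_cast; omega, edgeSimple_two_sub]
    simp only [mul_assoc]
  rw [hrep, conj_mul_eq_conj]
  simpa only [mul_assoc] using (edgeSimple_braid_four hn).symm

/-- Pushing a simple reflection through a coset representative, one braid relation at a time. -/
theorem tailRep_inv_mul_mul_mem_tailPara {m : ℕ} (hm : m + 1 ≤ n) {i : ℕ} (hi : i ≤ 2 * m + 1)
    {k : ℤ} (hk : 1 - m ≤ k) (hkm : k ≤ m + 1) (hfix : mirrorSwap k (m + 1 - i) = m + 1 - i) :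
    (tailRep n (m + 1) i)⁻¹ * edgeSimple n k * tailRep n (m + 1) i ∈ tailPara n m := by
  induction i using Nat.strong_induction_on generalizing k with
  | _ i ih =>
  obtain _ | j := i
  · have hne : k ≠ m + 1 ∧ k ≠ 1 - m := by
      rw [mirrorSwap_apply] at hfix
      split_ifs at hfix <;> omega
    simpa only [tailRep, inv_one, one_mul, mul_one] using
      edgeSimple_mem_tailPara (by omega) (by omega)
  obtain ⟨p, hp⟩ : ∃ p : ℤ, p = m + 1 - j := ⟨_, rfl⟩
  have hfix_sub : mirrorSwap k (p - 1) = p - 1 := by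
    rw [hp, sub_sub]
    exact_mod_cast hfix
  by_cases hfix_p : mirrorSwap k p = p
  · rw [tailRep, ← hp, conj_mul_eq_conj (edgeSimple_mul_comm_of_apply_eq (by omega) (by omega)
      (by omega) (by omega) hfix_p hfix_sub)]
    exact ih j (by omega) (by omega) hk hkm (hp ▸ hfix_p)
  have hk_succ : p ≠ 1 ∧ (k = p + 1 ∨ k = 2 - (p + 1)) := by
    rw [mirrorSwap_apply] at hfix_p hfix_sub
    split_ifs at hfix_p hfix_sub <;> omega
  obtain ⟨j, rfl⟩ : ∃ i, j = i + 1 := ⟨j - 1, by omega⟩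
  rw [edgeSimple_congr hk_succ.2]
  push_cast at hp
  rcases eq_or_ne p 0 with rfl | hp₀
  · obtain ⟨j, rfl⟩ : ∃ i, j = i + 1 := ⟨j - 1, by omega⟩
    have ht : (m + 1 - j : ℤ) = 2 := by push_cast at hp; omega
    rw [zero_add, conj_tailRep_add_three ht (by omega)]
    exact ih j (by omega) (by omega) (by omega) (by omega) (by rw [ht]; rfl)
  · rw [conj_tailRep_add_two (by omega) (by omega) (by omega) hp₀ hk_succ.1]
    refine ih j (by omega) (by omega) (by omega) (by omega) ?_
    rw [mirrorSwap_apply]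
    split_ifs <;> omega

theorem exists_tailRep_inv_mul_mem {m : ℕ} (hm : m + 1 ≤ n) {w : WB n}
    (hw : w ∈ tailPara n (m + 1)) : ∃ i ≤ 2 * m + 1,
      mirrorRep n w (m + 1) = m + 1 - i ∧ (tailRep n (m + 1) i)⁻¹ * w ∈ tailPara n m := by
  have hstep {k : ℤ} (hk₁ : 1 ≤ k) (hkm : k ≤ m + 1) {w : WB n} (h : ∃ i ≤ 2 * m + 1,
      mirrorRep n w (m + 1) = m + 1 - i ∧ (tailRep n (m + 1) i)⁻¹ * w ∈ tailPara n m) :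
      ∃ i ≤ 2 * m + 1, mirrorRep n (edgeSimple n k * w) (m + 1) = m + 1 - i ∧
        (tailRep n (m + 1) i)⁻¹ * (edgeSimple n k * w) ∈ tailPara n m := by
    obtain ⟨i, hi, hval, hmem⟩ := h
    rw [map_mul, Equiv.Perm.mul_apply, hval, mirrorRep_edgeSimple (by omega) (by omega)]
    rcases mirrorSwap_trichotomy k (m + 1 - i) with hfix | ⟨hdown, hk⟩ | ⟨hup, hk⟩
    · refine ⟨i, hi, hfix, ?_⟩
      have h := mul_mem (tailRep_inv_mul_mul_mem_tailPara hm hi (by omega) hkm hfix) hmem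
      simpa only [mul_assoc, mul_inv_cancel_left] using h
    · refine ⟨i + 1, by omega, by rw [hdown]; push_cast; ring, ?_⟩
      rwa [tailRep, edgeSimple_congr hk, mul_inv_rev, mul_assoc, inv_mul_cancel_left]
    · obtain ⟨j, rfl⟩ : ∃ j, i = j + 1 := ⟨i - 1, by omega⟩
      have hs : edgeSimple n k = edgeSimple n (m + 1 - j) :=
        edgeSimple_congr (by push_cast at hk; omega)
      refine ⟨j, by omega, by rw [hup]; push_cast; ring, ?_⟩
      rwa [tailRep, ← hs, mul_inv_rev, edgeSimple_inv, mul_assoc] at hmem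
  induction hw using Subgroup.closure_induction_left with
  | one => exact ⟨0, by omega, by simp [tailRep]⟩
  | mul_left x hx w _ ih =>
    obtain ⟨k, ⟨hk₁, hkm⟩, rfl⟩ := hx
    exact hstep hk₁ (by exact_mod_cast hkm) ih
  | inv_mul_cancel x hx w _ ih =>
    obtain ⟨k, ⟨hk₁, hkm⟩, rfl⟩ := hx
    rw [edgeSimple_inv]
    exact hstep hk₁ (by exact_mod_cast hkm) ih

theorem mirrorRep_injective (n : ℕ) : Function.Injective (mirrorRep n) := by
  rw [injective_iff_map_eq_one]
  intro w hw
  have hmem (m : ℕ) (hm : m ≤ n) : w ∈ tailPara n m := by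
    induction hm using Nat.decreasingInduction with
    | self => exact mem_tailPara_self w
    | of_succ m hm ih =>
      obtain ⟨i, -, hval, hw'⟩ := exists_tailRep_inv_mul_mem hm ih
      rw [hw, Equiv.Perm.one_apply] at hval
      obtain rfl : i = 0 := by omega
      simpa only [tailRep, inv_one, one_mul] using hw'
  simpa only [tailPara_zero, Subgroup.mem_bot] using hmem 0 n.zero_le

theorem mirrorRep_ext {v w : WB n}
    (h : ∀ x : ℤ, 1 ≤ x → x ≤ n → mirrorRep n v x = mirrorRep n w x) : v = w := by
  refine mirrorRep_injective n <|
    (isMirrored_mirrorRep v).ext (isMirrored_mirrorRep w) fun x hx => ?_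
  rcases le_or_gt x n with hxn | hxn
  · exact h x hx hxn
  · rw [mirrorRep_apply_of_mem_tailPara le_rfl (mem_tailPara_self v) hxn,
      mirrorRep_apply_of_mem_tailPara le_rfl (mem_tailPara_self w) hxn]

theorem exists_mirrorRep_eq {σ : Equiv.Perm ℤ} (hσ : IsMirrored σ) {m : ℕ} (hm : m ≤ n)
    (hfix : ∀ x : ℤ, m < x → σ x = x) : ∃ w, mirrorRep n w = σ := by
  induction m generalizing σ with
  | zero =>
    refine ⟨1, (isMirrored_mirrorRep 1).ext hσ fun x hx => ?_⟩
    rw [map_one, Equiv.Perm.one_apply, hfix x (by omega)]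
  | succ m ih =>
    push_cast at hfix
    have hrange := hσ.mapsTo_Icc hfix (x := m + 1) ⟨by omega, le_rfl⟩
    rw [Set.mem_Icc] at hrange
    obtain ⟨i, hi⟩ := Int.le.dest hrange.2
    have hrep : mirrorRep n (tailRep n (m + 1) i)⁻¹ (σ (m + 1)) = m + 1 := by
      rw [map_inv, Equiv.Perm.inv_eq_iff_eq,
        mirrorRep_tailRep (by exact_mod_cast hm) (by omega)]
      omega
    obtain ⟨w, hw⟩ := ih ((isMirrored_mirrorRep (tailRep n (m + 1) i)⁻¹).mul hσ) (by omega)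
      fun x hx => by
        rcases (show m + 1 ≤ x by omega).eq_or_lt with rfl | hlt
        · exact hrep
        · rw [Equiv.Perm.mul_apply, hfix x hlt]
          exact mirrorRep_apply_of_mem_tailPara hm
            (inv_mem (tailRep_mem_tailPara (by omega))) (by exact_mod_cast hlt)
    exact ⟨tailRep n (m + 1) i * w, by rw [map_mul, hw, map_inv, mul_inv_cancel_left]⟩

end Faithful

section LongestElements

variable {n : ℕ}

/-- A form of the exchange condition: since `mirrorRep` is faithful, the first letter of the word
that restores the order of the images of `k - 1` and `k` can be cancelled against the new one. -/
theorem length_wordProd_mul_edgeSimple_lt {k : ℤ} (hk : 2 - n ≤ k) (hkn : k ≤ n)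
    {l : List (Fin n)}
    (h : mirrorRep n ((csB n).wordProd l) k < mirrorRep n ((csB n).wordProd l) (k - 1)) :
    (csB n).length ((csB n).wordProd l * edgeSimple n k) < l.length := by
  induction l with
  | nil =>
    simp only [CoxeterSystem.wordProd_nil, map_one, Equiv.Perm.one_apply] at h
    omega
  | cons j l ih =>
    rw [CoxeterSystem.wordProd_cons, map_mul, mirrorRep_simple, Equiv.Perm.mul_apply,
      Equiv.Perm.mul_apply] at h
    rw [CoxeterSystem.wordProd_cons, mul_assoc, List.length_cons]
    set u := (csB n).wordProd l
    by_cases hlt : mirrorRep n u k < mirrorRep n u (k - 1)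
    · have hmul := (csB n).length_mul_le ((csB n).simple j) (u * edgeSimple n k)
      rw [(csB n).length_simple] at hmul
      have := ih hlt
      omega
    have hu : mirrorRep n u (k - 1) < mirrorRep n u k :=
      lt_of_le_of_ne (not_lt.1 hlt) ((mirrorRep n u).injective.ne (sub_one_lt k).ne)
    obtain ⟨hadj, hswap⟩ := eq_sub_one_and_mirrorSwap_eq_of_lt hu h
    have hcancel : u * edgeSimple n k = (csB n).simple j * u := by
      refine mirrorRep_injective n ?_
      rw [map_mul, map_mul, mirrorRep_simple, mirrorRep_edgeSimple hk hkn,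
        (isMirrored_mirrorRep u).mul_mirrorSwap hadj, hswap]
    rw [hcancel, CoxeterSystem.simple_mul_simple_cancel_left, Nat.lt_succ_iff]
    exact (csB n).length_wordProd_le l

theorem length_mul_edgeSimple_lt {k : ℤ} (hk : 2 - n ≤ k) (hkn : k ≤ n) {w : WB n}
    (h : mirrorRep n w k < mirrorRep n w (k - 1)) :
    (csB n).length (w * edgeSimple n k) < (csB n).length w := by
  obtain ⟨l, hl, rfl⟩ := (csB n).exists_isReduced w
  rw [hl.eq]
  exact length_wordProd_mul_edgeSimple_lt hk hkn h

theorem mirrorRep_lt_of_length_le {k : ℤ} (hk : 2 - n ≤ k) (hkn : k ≤ n) {w : WB n}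
    (h : (csB n).length (w * edgeSimple n k) ≤ (csB n).length w) :
    mirrorRep n w k < mirrorRep n w (k - 1) := by
  by_contra hge
  have hlt : mirrorRep n w (k - 1) < mirrorRep n w k :=
    lt_of_le_of_ne (not_lt.1 hge) ((mirrorRep n w).injective.ne (sub_one_lt k).ne)
  refine h.not_gt ?_
  have hswap : mirrorSwap k k = k - 1 ∧ mirrorSwap k (k - 1) = k := by
    rw [mirrorSwap_apply, mirrorSwap_apply]
    constructor <;> split_ifs <;> omega
  have h := length_mul_edgeSimple_lt hk hkn (w := w * edgeSimple n k) <| by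
    rwa [map_mul, mirrorRep_edgeSimple hk hkn, Equiv.Perm.mul_apply, Equiv.Perm.mul_apply,
      hswap.1, hswap.2]
  rwa [mul_assoc, edgeSimple_mul_self, mul_one] at h

theorem mirrorRep_apply_of_forall_length_le {w₀ : WB n}
    (hw₀ : ∀ v : WB n, (csB n).length v ≤ (csB n).length w₀) {x : ℤ} (hx : 1 ≤ x) (hxn : x ≤ n) :
    mirrorRep n w₀ x = 1 - x := by
  have hlt (k : ℤ) (hk : 1 ≤ k) (hkn : k ≤ n) : mirrorRep n w₀ k < mirrorRep n w₀ (k - 1) :=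
    mirrorRep_lt_of_length_le (by omega) hkn (hw₀ _)
  have h_one := hlt 1 le_rfl (by omega)
  rw [isMirrored_mirrorRep] at h_one
  have h_last := (mirrorRep_mapsTo_Icc w₀ (x := n) ⟨by omega, le_rfl⟩).1
  rw [eq_add_one_sub_of_lt (A := 0) (fun k hk => hlt k hk.le) (by omega) (by omega) hx hxn,
    zero_add]

theorem one_le_mirrorRep_iff_of_mem_paraB {i : Fin n} (hi : (i : ℕ) + 1 = n) {w : WB n}
    (hw : w ∈ paraB n i) (x : ℤ) : 1 ≤ mirrorRep n w x ↔ 1 ≤ x := by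
  induction hw using Subgroup.closure_induction generalizing x with
  | mem _ hs =>
    obtain ⟨j, hj, rfl⟩ := hs
    have hj : (j : ℕ) ≠ i := Fin.val_ne_of_ne hj
    rw [mirrorRep_simple]
    exact mirrorSwap_apply_pos_iff (by omega) x
  | one => rfl
  | mul v w _ _ hv hw => rw [map_mul, Equiv.Perm.mul_apply, hv, hw]
  | inv w _ hw => rw [← hw, ← Equiv.Perm.mul_apply, ← map_mul, mul_inv_cancel, map_one,
      Equiv.Perm.one_apply]

theorem mirrorRep_apply_of_forall_mem_paraB_length_le {i : Fin n} (hi : (i : ℕ) + 1 = n)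
    {wₙ : WB n} (hwₙ : wₙ ∈ paraB n i)
    (hmax : ∀ v ∈ paraB n i, (csB n).length v ≤ (csB n).length wₙ) {x : ℤ} (hx : 1 ≤ x)
    (hxn : x ≤ n) : mirrorRep n wₙ x = n + 1 - x := by
  have hlt (k : ℤ) (hk : 1 < k) (hkn : k ≤ n) : mirrorRep n wₙ k < mirrorRep n wₙ (k - 1) := by
    refine mirrorRep_lt_of_length_le (by omega) hkn (hmax _ (mul_mem hwₙ ?_))
    obtain ⟨j, hj, hjk⟩ := exists_edgeSimple_eq_simple (n := n) (p := k) (by omega) hkn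
    rw [hj]
    refine Subgroup.subset_closure ⟨j, ?_, rfl⟩
    rintro rfl
    omega
  have h_one := (mirrorRep_mapsTo_Icc wₙ (x := 1) ⟨by omega, by omega⟩).2
  have h_last := (one_le_mirrorRep_iff_of_mem_paraB hi hwₙ n).2 (by omega)
  exact eq_add_one_sub_of_lt hlt h_one (by omega) hx hxn

end LongestElements

section HalfTurn

variable {n : ℕ}

theorem segB_of_lt {a b : ℕ} (h : b < a) : segB n a b = 1 := by
  rw [segB, List.filter_eq_nil_iff.2 fun k _ => by rw [decide_eq_true_eq]; omega, List.map_nil,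
    List.prod_nil]

theorem segB_eq_simple_mul {a b : ℕ} (ha : 1 ≤ a) (hab : a ≤ b) (han : a ≤ n) :
    segB n a b = (csB n).simple ⟨a - 1, by omega⟩ * segB n (a + 1) b := by
  rw [segB, segB, ← List.prod_cons, ← List.map_cons]
  congr 2
  refine List.SortedLT.eq_of_mem_iff ?_ ?_ fun k => ?_
  · exact ((List.pairwise_lt_finRange n).filter _).sortedLT
  · refine List.Pairwise.sortedLT (List.pairwise_cons.2
      ⟨fun k hk => ?_, (List.pairwise_lt_finRange n).filter _⟩)
    rw [List.mem_filter, decide_eq_true_eq] at hk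
    change a - 1 < (k : ℕ)
    omega
  · simp only [List.mem_filter, List.mem_finRange, decide_eq_true_eq, List.mem_cons, Fin.ext_iff,
      true_and]
    omega

theorem mirrorRep_segB {t : ℕ} (ht : t ≤ n) {x : ℤ} (hx : 1 ≤ x) :
    mirrorRep n (segB n (n + 1 - t) n) x =
      if x = 1 then 1 - (t : ℤ) else if x ≤ t then x - 1 else x := by
  induction t with
  | zero =>
    rw [segB_of_lt (by omega), map_one, Equiv.Perm.one_apply]
    split_ifs <;> omega
  | succ t ih =>
    rw [segB_eq_simple_mul (by omega) (by omega) (by omega),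
      show n + 1 - (t + 1) + 1 = n + 1 - t by omega, map_mul, Equiv.Perm.mul_apply, ih (by omega),
      mirrorRep_simple, show (n - (n + 1 - (t + 1) - 1 : ℕ) : ℤ) = t + 1 by omega,
      mirrorSwap_apply]
    split_ifs <;> omega

/-- The product `s_n (s_{n-1} s_n) ⋯ (s_1 ⋯ s_n)`, acting as translation by `n` modulo `2n` on the
window `1 - n, …, n`. -/
def halfTurn (n : ℕ) : WB n := ((List.range n).map fun t => segB n (n - t) n).prod

theorem mirrorRep_prod_segB {m : ℕ} (hm : m ≤ n) {x : ℤ} (hx : 1 ≤ x) :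
    mirrorRep n ((List.range m).map fun t => segB n (n - t) n).prod x =
      if x ≤ m then x - m else x := by
  induction m generalizing x with
  | zero => simp
  | succ m ih =>
    set u := ((List.range m).map fun t => segB n (n - t) n).prod
    have hseg := mirrorRep_segB hm hx
    rw [Nat.add_sub_add_right] at hseg
    have hneg : mirrorRep n u (1 - (m + 1 : ℕ)) = - m := by
      rw [isMirrored_mirrorRep, ih (by omega) (by omega), if_neg (by omega)]
      push_cast
      ring
    rw [List.range_succ, List.map_append, List.prod_append, List.map_singleton,
      List.prod_singleton, map_mul, Equiv.Perm.mul_apply, hseg]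
    split_ifs with h₁ hle
    · rw [hneg]; omega
    · omega
    · rw [ih (by omega) (by omega), if_pos (by omega)]; omega
    · rw [ih (by omega) hx, if_neg (by omega)]

theorem mirrorRep_halfTurn {x : ℤ} (hx : 1 ≤ x) (hxn : x ≤ n) :
    mirrorRep n (halfTurn n) x = x - n := by
  rw [halfTurn, mirrorRep_prod_segB le_rfl hx, if_pos hxn]

theorem longest_mul_longest_eq_halfTurn {i : Fin n} (hi : (i : ℕ) + 1 = n) {w₀ wₙ : WB n}
    (hw₀ : ∀ v : WB n, (csB n).length v ≤ (csB n).length w₀) (hwₙ : wₙ ∈ paraB n i)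
    (hmax : ∀ v ∈ paraB n i, (csB n).length v ≤ (csB n).length wₙ) : wₙ * w₀ = halfTurn n := by
  refine mirrorRep_ext fun x hx hxn => ?_
  rw [mirrorRep_halfTurn hx hxn, map_mul, Equiv.Perm.mul_apply,
    mirrorRep_apply_of_forall_length_le hw₀ hx hxn, isMirrored_mirrorRep,
    mirrorRep_apply_of_forall_mem_paraB_length_le hi hwₙ hmax hx hxn]
  ring

end HalfTurn

section OddCoxeterWords

variable {n : ℕ} {l : List (Fin n)}

/-- The reduced words of the Coxeter elements of `W_J`, where `J` is the set of odd Bourbaki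
labels; letters are zero-based, so the letter `j` stands for `s_{j + 1}`. -/
def IsOddCoxeterWord (l : List (Fin n)) : Prop :=
  l.Nodup ∧ ∀ j : Fin n, j ∈ l ↔ Odd ((j : ℕ) + 1)

theorem sum_range_count_map_val (l : List (Fin n)) :
    ∑ i ∈ Finset.range n, (l.map Fin.val).count i = l.length := by
  simpa using Multiset.sum_count_eq_card (s := Finset.range n) (m := (l.map Fin.val : Multiset ℕ))
    (by simp)

theorem isOddCoxeterWord_iff_count :
    IsOddCoxeterWord l ↔ ∀ i < n, (l.map Fin.val).count i = if Even i then 1 else 0 := by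
  have hcount (j : Fin n) : (l.map Fin.val).count (j : ℕ) = l.count j :=
    List.count_map_of_injective _ _ Fin.val_injective _
  simp only [IsOddCoxeterWord, Nat.odd_add_one, Nat.not_odd_iff_even]
  constructor
  · rintro ⟨hnodup, hmem⟩ i hi
    rw [hcount ⟨i, hi⟩, hnodup.count]
    simp only [hmem]
  · intro h
    have hcount_even (j : Fin n) : l.count j = if Even (j : ℕ) then 1 else 0 :=
      (hcount j).symm.trans (h j j.2)
    refine ⟨List.nodup_iff_count_le_one.2 fun j => ?_, fun j => ?_⟩
    · rw [hcount_even]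
      split_ifs <;> omega
    · rw [← List.count_pos_iff, hcount_even]
      split_ifs with hj <;> simp [hj]

theorem IsOddCoxeterWord.length_eq (hl : IsOddCoxeterWord l) : l.length = (n + 1) / 2 := by
  rw [← sum_range_count_map_val, ← sum_range_ite_even]
  exact Finset.sum_congr rfl fun i hi =>
    isOddCoxeterWord_iff_count.1 hl i (Finset.mem_range.1 hi)

theorem mirrorRep_wordProd (l : List (Fin n)) :
    mirrorRep n ((csB n).wordProd l) = (l.map fun j : Fin n => mirrorSwap (n - j)).prod := by
  rw [CoxeterSystem.wordProd, map_list_prod, List.map_map]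
  exact congrArg List.prod (List.map_congr_left fun j _ => mirrorRep_simple j)

theorem IsOddCoxeterWord.mirrorRep_apply (hl : IsOddCoxeterWord l) {y : ℤ} (hy : 2 - n ≤ y)
    (hyn : y ≤ n) (heven : Even (n - y)) : mirrorRep n ((csB n).wordProd l) y = y - 1 := by
  have hdisj : (l.map fun j : Fin n => mirrorSwap (n - j)).Pairwise Equiv.Perm.Disjoint := by
    have hfar {i j : Fin n} (hi : i ∈ l) (hj : j ∈ l) (hij : i < j) :
        (mirrorSwap (n - i)).Disjoint (mirrorSwap (n - j)) := by
      rw [hl.2, Nat.odd_iff] at hi hj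
      have : (i : ℕ) < j := hij
      exact disjoint_mirrorSwap (by omega) (by omega)
    refine List.pairwise_map.2 (hl.1.pairwise_of_forall_ne fun i hi j hj hij => ?_)
    rcases lt_or_gt_of_ne hij with hlt | hgt
    exacts [hfar hi hj hlt, (hfar hj hi hgt).symm]
  obtain ⟨j, -, hj⟩ := exists_edgeSimple_eq_simple hy hyn
  have hmem : j ∈ l := by
    rw [hl.2, Nat.odd_iff]
    rw [Int.even_iff] at heven
    omega
  have hdown : mirrorSwap (n - j) y = y - 1 := by
    rw [mirrorSwap_apply, if_pos (by omega)]
  rw [mirrorRep_wordProd, ← hdown]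
  exact prod_apply_of_pairwise_disjoint hdisj (List.mem_map_of_mem hmem) (by omega)

end OddCoxeterWords

section Conjugates

variable {n : ℕ} {l : List (Fin n)}

theorem mirrorRep_ne_of_isConj_halfTurn {v : WB n} (hv : IsConj (halfTurn n) v) {x : ℤ}
    (hx : x ∈ Set.Icc (1 - n : ℤ) n) : mirrorRep n v x ≠ x := by
  obtain ⟨c, rfl⟩ := isConj_iff.1 hv
  intro hfix
  rw [map_mul, map_mul, Equiv.Perm.mul_apply, Equiv.Perm.mul_apply, map_inv,
    ← Equiv.Perm.eq_inv_iff_eq, ← map_inv] at hfix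
  have hy := mirrorRep_mapsTo_Icc c⁻¹ hx
  set y := mirrorRep n c⁻¹ x
  rw [Set.mem_Icc] at hx hy
  rcases le_or_gt 1 y with hpos | hneg
  · rw [mirrorRep_halfTurn hpos hy.2] at hfix
    omega
  · have h := mirrorRep_halfTurn (n := n) (x := 1 - y) (by omega) (by omega)
    rw [isMirrored_mirrorRep, hfix] at h
    omega

theorem exists_mirrorRep_eq_one_sub_of_isConj_halfTurn (hn : Odd n) {v : WB n}
    (hv : IsConj (halfTurn n) v) : ∃ x, mirrorRep n v x = 1 - x := by
  obtain ⟨c, rfl⟩ := isConj_iff.1 hv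
  obtain ⟨m, rfl⟩ := hn
  refine ⟨mirrorRep _ c (m + 1), ?_⟩
  rw [← isMirrored_mirrorRep, ← Equiv.Perm.mul_apply, ← map_mul, inv_mul_cancel_right, map_mul,
    Equiv.Perm.mul_apply, mirrorRep_halfTurn (by omega) (by omega)]
  congr 1
  push_cast
  ring

theorem exists_mem_mirrorSwap_ne (hl : IsConj (halfTurn n) ((csB n).wordProd l))
    {x : ℤ} (hx : x ∈ Set.Icc (1 - n : ℤ) n) : ∃ j ∈ l, mirrorSwap (n - j) x ≠ x := by
  by_contra! h
  refine mirrorRep_ne_of_isConj_halfTurn hl hx ?_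
  rw [mirrorRep_wordProd]
  exact prod_apply_of_forall_apply_eq (List.forall_mem_map.2 h)

theorem one_le_count_zero_of_isConj_halfTurn (hl : IsConj (halfTurn n) ((csB n).wordProd l))
    (hn : 0 < n) : 1 ≤ (l.map Fin.val).count 0 := by
  obtain ⟨j, hj, hne⟩ := exists_mem_mirrorSwap_ne hl (x := n) ⟨by omega, le_rfl⟩
  refine List.one_le_count_iff.2 (List.mem_map.2 ⟨j, hj, ?_⟩)
  by_contra hj₀
  rw [mirrorSwap_apply] at hne
  split_ifs at hne <;> omega

theorem one_le_count_add_count_succ_of_isConj_halfTurn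
    (hl : IsConj (halfTurn n) ((csB n).wordProd l)) {i : ℕ} (hi : i + 1 < n) :
    1 ≤ (l.map Fin.val).count i + (l.map Fin.val).count (i + 1) := by
  obtain ⟨j, hj, hne⟩ := exists_mem_mirrorSwap_ne hl (x := n - i - 1) ⟨by omega, by omega⟩
  have hij : (j : ℕ) = i ∨ (j : ℕ) = i + 1 := by
    rw [mirrorSwap_apply] at hne
    split_ifs at hne <;> omega
  have hcount : 1 ≤ (l.map Fin.val).count (j : ℕ) :=
    List.one_le_count_iff.2 (List.mem_map_of_mem hj)
  rcases hij with h | h <;> rw [h] at hcount <;> omega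

theorem one_le_count_last_of_isConj_halfTurn (hl : IsConj (halfTurn n) ((csB n).wordProd l))
    (hn : Odd n) : 1 ≤ (l.map Fin.val).count (n - 1) := by
  have hpos := hn.pos
  by_contra hcount
  have hlast : n - 1 ∉ l.map Fin.val := fun h => hcount (List.one_le_count_iff.2 h)
  have hpara : (csB n).wordProd l ∈ paraB n ⟨n - 1, by omega⟩ := by
    refine Subgroup.list_prod_mem _ (List.forall_mem_map.2 fun j hj => ?_)
    refine Subgroup.subset_closure ⟨j, ?_, rfl⟩
    rintro rfl
    exact hlast (List.mem_map_of_mem hj)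
  obtain ⟨x, hx⟩ := exists_mirrorRep_eq_one_sub_of_isConj_halfTurn hn hl
  have h := one_le_mirrorRep_iff_of_mem_paraB (Nat.sub_add_cancel hpos) hpara x
  rw [hx] at h
  omega

end Conjugates

section MinimalLength

variable {n : ℕ} {v : WB n} {l : List (Fin n)}

/-- The perfect shuffle interleaving the halves `1 - n, …, 0` and `1, …, n` of the window. It
conjugates the half turn into the product of the exchanges `n - 2i - 1 ↔ n - 2i`. -/
def riffle (n : ℕ) : Equiv.Perm ℤ where
  toFun x := if 1 ≤ x ∧ x ≤ n then 2 * x - n else if 1 - n ≤ x ∧ x ≤ 0 then 2 * x + n - 1 else x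
  invFun y := if 1 - n ≤ y ∧ y ≤ n then
    if (y + n) % 2 = 0 then (y + n) / 2 else (y - n + 1) / 2 else y
  left_inv x := by
    simp only
    split_ifs <;> omega
  right_inv y := by
    simp only
    split_ifs <;> omega

theorem riffle_apply (x : ℤ) : riffle n x =
    if 1 ≤ x ∧ x ≤ n then 2 * x - n else if 1 - n ≤ x ∧ x ≤ 0 then 2 * x + n - 1 else x := rfl

theorem isMirrored_riffle (n : ℕ) : IsMirrored (riffle n) := fun x => by
  simp only [riffle_apply]
  split_ifs <;> omega

theorem IsOddCoxeterWord.isConj_halfTurn (hl : IsOddCoxeterWord l) :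
    IsConj (halfTurn n) ((csB n).wordProd l) := by
  obtain ⟨g, hg⟩ := exists_mirrorRep_eq (m := n) (isMirrored_riffle n) le_rfl
    fun x hx => by rw [riffle_apply, if_neg (by omega), if_neg (by omega)]
  refine isConj_iff.2 ⟨g, mul_inv_eq_of_eq_mul (mirrorRep_ext fun x hx hxn => ?_)⟩
  rw [map_mul, map_mul, hg, Equiv.Perm.mul_apply, Equiv.Perm.mul_apply,
    mirrorRep_halfTurn hx hxn, riffle_apply x, if_pos ⟨hx, hxn⟩,
    hl.mirrorRep_apply (by omega) (by omega) ⟨n - x, by ring⟩, riffle_apply]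
  split_ifs <;> omega

theorem half_le_length_of_isConj_halfTurn (hv : IsConj (halfTurn n) v) :
    (n + 1) / 2 ≤ (csB n).length v := by
  obtain ⟨l, hl, rfl⟩ := (csB n).exists_isReduced v
  rw [hl.eq, ← sum_range_count_map_val]
  exact half_le_sum_range (one_le_count_zero_of_isConj_halfTurn hv)
    fun _ => one_le_count_add_count_succ_of_isConj_halfTurn hv

theorem exists_isOddCoxeterWord_of_isConj_halfTurn (hv : IsConj (halfTurn n) v)
    (hlen : (csB n).length v ≤ (n + 1) / 2) :
    ∃ l, IsOddCoxeterWord l ∧ v = (csB n).wordProd l := by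
  obtain ⟨l, hl, rfl⟩ := (csB n).exists_isReduced v
  rw [hl.eq, ← sum_range_count_map_val] at hlen
  exact ⟨l, isOddCoxeterWord_iff_count.2 <| eq_ite_even_of_sum_range_le_half
    (one_le_count_zero_of_isConj_halfTurn hv)
    (fun _ => one_le_count_add_count_succ_of_isConj_halfTurn hv)
    (one_le_count_last_of_isConj_halfTurn hv) hlen, rfl⟩

theorem IsOddCoxeterWord.length_wordProd (hl : IsOddCoxeterWord l) :
    (csB n).length ((csB n).wordProd l) = (n + 1) / 2 :=
  le_antisymm (hl.length_eq ▸ (csB n).length_wordProd_le l)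
    (half_le_length_of_isConj_halfTurn hl.isConj_halfTurn)

theorem exists_isOddCoxeterWord (n : ℕ) : ∃ l : List (Fin n), IsOddCoxeterWord l :=
  ⟨(List.finRange n).filter fun j : Fin n => Odd ((j : ℕ) + 1),
    (List.nodup_finRange n).filter _, by simp⟩

end MinimalLength

/-- In the Weyl group of type `Cₙ` (`n ≥ 2`, Bourbaki labels; its
Coxeter system coincides with that of type `Bₙ`),
`w_{n,0}·w₀ = s_n·(s_{n−1}s_n)·(s_{n−2}s_{n−1}s_n)⋯(s_1 s_2 ⋯ s_n)`, and the set of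
minimal length elements of the conjugacy class of `w_{n,0}·w₀` equals the set of Coxeter
elements of the standard parabolic subgroup `W_J`, `J = {j ∈ {1,…,n} : j odd}`; in
particular the minimal length in this conjugacy class equals `⌈n/2⌉`. -/
theorem typeC_wn0_mul_w0 (n : ℕ) (hn : 2 ≤ n)
    (w₀ : WB n) (hw₀ : ∀ v : WB n, (csB n).length v ≤ (csB n).length w₀)
    (wₙ : WB n) (hwₙ : wₙ ∈ paraB n ⟨n - 1, by omega⟩)
    (hwₙmax : ∀ v ∈ paraB n ⟨n - 1, by omega⟩, (csB n).length v ≤ (csB n).length wₙ) :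
    wₙ * w₀ = ((List.range n).map fun t => segB n (n - t) n).prod ∧
    {w : WB n | IsConj (wₙ * w₀) w ∧
        ∀ v : WB n, IsConj (wₙ * w₀) v → (csB n).length w ≤ (csB n).length v}
      = {w : WB n | ∃ l : List (Fin n), l.Nodup ∧
          (∀ j : Fin n, j ∈ l ↔ Odd ((j : ℕ) + 1)) ∧ w = (csB n).wordProd l} ∧
    sInf {k : ℕ | ∃ v : WB n, IsConj (wₙ * w₀) v ∧ k = (csB n).length v}
      = (n + 1) / 2 := by
  obtain ⟨l, hl⟩ := exists_isOddCoxeterWord n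
  rw [longest_mul_longest_eq_halfTurn (Nat.sub_add_cancel (by omega)) hw₀ hwₙ hwₙmax]
  refine ⟨rfl, Set.ext fun w => ⟨fun ⟨hw, hmin⟩ => ?_, ?_⟩, IsLeast.csInf_eq ⟨?_, ?_⟩⟩
  · obtain ⟨l', hl', rfl⟩ := exists_isOddCoxeterWord_of_isConj_halfTurn hw
      ((hmin _ hl.isConj_halfTurn).trans_eq hl.length_wordProd)
    exact ⟨l', hl'.1, hl'.2, rfl⟩
  · rintro ⟨l', hnodup, hmem, rfl⟩
    have hl' : IsOddCoxeterWord l' := ⟨hnodup, hmem⟩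
    exact ⟨hl'.isConj_halfTurn, fun v hv =>
      hl'.length_wordProd.trans_le (half_le_length_of_isConj_halfTurn hv)⟩
  · exact ⟨_, hl.isConj_halfTurn, hl.length_wordProd.symm⟩
  · rintro _ ⟨v, hv, rfl⟩
    exact half_le_length_of_isConj_halfTurn hv
end
end
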